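/- Let Γ₁ and Γ₂ be finitely presented groups which are quasi-isometric. Then Γ₁ is self-simulable if and only if Γ₂ is self-simulable. -/

import Mathlib

open scoped Pointwise

namespace SelfSim

/-- The left shift action of a group `G` on the full shift `G → A`:
`(g · x)(h) = x (g⁻¹ h)`. -/
def shift {G A : Type*} [Group G] (g : G) (x : G → A) : G → A := fun h => x (g⁻¹ * h)

/-- A `G`-subshift: a closed, shift-invariant subset of the full shift `G → A`
(`A` carrying its topology, `G → A` the product topology). -/
def IsSubshift {G A : Type*} [Group G] [TopologicalSpace A] (X : Set (G → A)) : Prop :=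
  IsClosed X ∧ ∀ (g : G) (x : G → A), x ∈ X → shift g x ∈ X

/-- A subshift of finite type: there are a finite set `F ⊆ G` and a set `𝓛` of patterns
on `F` such that `x ∈ X` iff every translate of `x` restricted to `F` lies in `𝓛`. -/
def IsSFT {G A : Type*} [Group G] (X : Set (G → A)) : Prop :=
  ∃ (F : Finset G) (L : Set (↥F → A)),
    ∀ x : G → A, x ∈ X ↔ ∀ g : G, (fun h : ↥F => x (g * (h : G))) ∈ L

/-- `φ` is a topological factor map from the shift action on `Z ⊆ G → A` onto the
action `act` of `G` on `Y ⊆ β`: continuous on `Z`, mapping `Z` into and onto `Y`,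
and equivariant. -/
def IsFactorMapOnto {G A β : Type*} [Group G] [TopologicalSpace A] [TopologicalSpace β]
    (Z : Set (G → A)) (φ : (G → A) → β) (act : G → β → β) (Y : Set β) : Prop :=
  ContinuousOn φ Z ∧ Set.MapsTo φ Z Y ∧ Set.SurjOn φ Z Y ∧
    ∀ (g : G) (x : G → A), x ∈ Z → φ (shift g x) = act g (φ x)

/-- A sofic subshift: a topological factor of some subshift of finite type
(over some finite alphabet, which we may take to be `Fin k`). -/
def IsSofic {G A : Type*} [Group G] [TopologicalSpace A] (Y : Set (G → A)) : Prop :=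
  ∃ (k : ℕ) (Z : Set (G → Fin k)) (φ : (G → Fin k) → (G → A)),
    IsSFT Z ∧ IsFactorMapOnto Z φ shift Y

/-- Recursively enumerable predicate. -/
def RE {α : Type*} [Primcodable α] (p : α → Prop) : Prop :=
  Partrec fun a => Part.assert (p a) fun _ => Part.some ()

/-- `x : ℕ → A` begins with the finite word `w`. -/
def ExtendsWord {A : Type*} (x : ℕ → A) (w : List A) : Prop :=
  ∀ i : Fin w.length, x i = w.get i

/-- A closed subset `Z ⊆ A^ℕ` is effectively closed if the set of words whose
cylinder is disjoint from `Z` is recursively enumerable. -/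
def EffectivelyClosedSet {A : Type*} [Primcodable A] [TopologicalSpace A]
    (Z : Set (ℕ → A)) : Prop :=
  IsClosed Z ∧ RE fun w : List A => ∀ x : ℕ → A, ExtendsWord x w → x ∉ Z

/-- `act` defines an action of `G` on the set `X ⊆ β`. -/
def IsActionOn {G β : Type*} [Group G] (act : G → β → β) (X : Set β) : Prop :=
  (∀ g : G, Set.MapsTo (act g) X X) ∧ (∀ x ∈ X, act 1 x = x) ∧
    ∀ (g h : G) (x : β), x ∈ X → act (g * h) x = act g (act h x)

/-- The set representation of the action `act` of `G` on `X ⊆ A^ℕ` with respect to the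
finite generating tuple `s : Fin m → G` (playing the role of the generating set `S`):
the set of `y ∈ (A^S)^ℕ` of the form `y(n)(s) = (s · x)(n)` for some `x ∈ X`. -/
def SetRep {G A : Type*} [Group G] {m : ℕ} (s : Fin m → G)
    (act : G → (ℕ → A) → ℕ → A) (X : Set (ℕ → A)) : Set (ℕ → (Fin m → A)) :=
  {y | ∃ x ∈ X, ∀ i : Fin m, (fun n => y n i) = act (s i) x}

/-- The action `act` of `G` on the closed set `X ⊆ A^ℕ` is effectively closed with respect
to the finite generating tuple `s` (which contains `1` and generates `G` as a monoid):
its set representation is an effectively closed subset of `(A^S)^ℕ`. -/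
def IsEffClosedActionWith {G A : Type*} [Group G] [Primcodable A] [TopologicalSpace A]
    {m : ℕ} (s : Fin m → G) (act : G → (ℕ → A) → ℕ → A) (X : Set (ℕ → A)) : Prop :=
  IsClosed X ∧ IsActionOn act X ∧ (∃ i, s i = 1) ∧
    Submonoid.closure (Set.range s) = ⊤ ∧
    EffectivelyClosedSet (SetRep s act X)

/-- The action `act` of `G` on `X ⊆ A^ℕ` is effectively closed (with respect to some
finite generating set containing `1`). -/
def IsEffClosedAction {G A : Type*} [Group G] [Primcodable A] [TopologicalSpace A]
    (act : G → (ℕ → A) → ℕ → A) (X : Set (ℕ → A)) : Prop :=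
  ∃ (m : ℕ) (s : Fin m → G), IsEffClosedActionWith s act X

/-- The action `act` of `G` on `X ⊆ A^ℕ` is a topological factor of some `G`-subshift
of finite type. -/
def IsFactorOfSFT {G A : Type*} [Group G] [TopologicalSpace A]
    (act : G → (ℕ → A) → ℕ → A) (X : Set (ℕ → A)) : Prop :=
  ∃ (k : ℕ) (Z : Set (G → Fin k)) (φ : (G → Fin k) → (ℕ → A)),
    IsSFT Z ∧ IsFactorMapOnto Z φ act X

/-- A group `G` is (dynamically) self-simulable if every effectively closed action of `G`
on a closed subset of `{0,1}^ℕ` is a topological factor of a `G`-subshift of finite type. -/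
def SelfSimulable (G : Type*) [Group G] : Prop :=
  ∀ (X : Set (ℕ → Bool)) (act : G → (ℕ → Bool) → ℕ → Bool),
    IsEffClosedAction act X → IsFactorOfSFT act X

/-- Amenability via the Følner condition: for every finite `K` and `δ > 0` there is a
nonempty finite `F` with `|KF △ F| ≤ δ |F|`. -/
def Amenable (G : Type*) [Group G] : Prop :=
  ∀ K : Set G, K.Finite → ∀ δ : ℝ, 0 < δ →
    ∃ F : Set G, F.Finite ∧ F.Nonempty ∧
      ((symmDiff (K * F) F).ncard : ℝ) ≤ δ * F.ncard

/-- A finitely generated group is recursively presented: for some finite tuple generating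
`G` as a monoid, the set of words evaluating to the identity is recursively enumerable. -/
def RecursivelyPresented (G : Type*) [Group G] : Prop :=
  ∃ (m : ℕ) (s : Fin m → G), Submonoid.closure (Set.range s) = ⊤ ∧
    RE fun w : List (Fin m) => (w.map s).prod = 1

/-- A finitely generated group has decidable word problem: for some finite tuple generating
`G` as a monoid, the set of words evaluating to the identity is decidable. -/
def DecidableWordProblem (G : Type*) [Group G] : Prop :=
  ∃ (m : ℕ) (s : Fin m → G), Submonoid.closure (Set.range s) = ⊤ ∧
    ComputablePred fun w : List (Fin m) => (w.map s).prod = 1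

/-- A pattern coding `c` (a finite list of pairs (word over the generators, letter))
holds in the configuration `x` at position `g`: `x (g ⬝ w̲) = a` for every pair `(w, a)`
of `c`. This says exactly that `x ∈ g·[c]`. -/
def PCHolds {G A : Type*} [Group G] {m : ℕ} (s : Fin m → G) (x : G → A) (g : G)
    (c : List (List (Fin m) × A)) : Prop :=
  ∀ p ∈ c, x (g * (p.1.map s).prod) = p.2

/-- A `G`-subshift `X ⊆ A^G` is effectively closed by patterns: for some finite generating
tuple `s`, there is a recursively enumerable set `𝒞` of pattern codings such that `X` is the
set of configurations avoiding every translate of every cylinder `[c]`, `c ∈ 𝒞`. -/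
def EffClosedByPatterns {G A : Type*} [Group G] [Primcodable A] (X : Set (G → A)) : Prop :=
  ∃ (m : ℕ) (s : Fin m → G), Submonoid.closure (Set.range s) = ⊤ ∧
    ∃ 𝒞 : Set (List (List (Fin m) × A)), RE (· ∈ 𝒞) ∧
      X = {x : G → A | ∀ (g : G) (c : List (List (Fin m) × A)), c ∈ 𝒞 → ¬ PCHolds s x g c}

/-- Word metric distance associated to a finite tuple `s` generating `G` as a monoid. -/
noncomputable def wordDist {G : Type*} [Group G] {m : ℕ} (s : Fin m → G) (g h : G) : ℕ :=
  sInf {n : ℕ | ∃ w : List (Fin m), w.length = n ∧ (w.map s).prod = g⁻¹ * h}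

/-- Two finitely generated groups are quasi-isometric (with respect to word metrics given
by some finite generating sets). -/
def QuasiIsometric (G₁ G₂ : Type*) [Group G₁] [Group G₂] : Prop :=
  ∃ (m₁ : ℕ) (s₁ : Fin m₁ → G₁) (m₂ : ℕ) (s₂ : Fin m₂ → G₂),
    Submonoid.closure (Set.range s₁) = ⊤ ∧ Submonoid.closure (Set.range s₂) = ⊤ ∧
    ∃ (f : G₂ → G₁) (A B C : ℝ), 1 ≤ A ∧ 0 ≤ B ∧ 0 ≤ C ∧
      (∀ x y : G₂,
        (1 / A) * (wordDist s₂ x y : ℝ) - B ≤ (wordDist s₁ (f x) (f y) : ℝ) ∧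
        (wordDist s₁ (f x) (f y) : ℝ) ≤ A * (wordDist s₂ x y : ℝ) + B) ∧
      ∀ z : G₁, ∃ x : G₂, (wordDist s₁ z (f x) : ℝ) ≤ C

/-- A finitely presented group: a quotient of a finitely generated free group by the
normal closure of finitely many relators. -/
def FinitelyPresentedGroup (G : Type*) [Group G] : Prop :=
  ∃ (m : ℕ) (f : FreeGroup (Fin m) →* G) (R : Finset (FreeGroup (Fin m))),
    Function.Surjective f ∧ f.ker = Subgroup.normalClosure (R : Set (FreeGroup (Fin m)))

/-- A subgroup `Δ ≤ G` is mediated: there is a finite generating set `T` of `G` such that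
`Δ ∩ tΔt⁻¹` is non-amenable for every `t ∈ T`. -/
def Mediated {G : Type*} [Group G] (Δ : Subgroup G) : Prop :=
  ∃ T : Finset G, Subgroup.closure (T : Set G) = ⊤ ∧
    ∀ t ∈ T, ¬ Amenable ↥(Δ ⊓ Subgroup.map (MulAut.conj t).toMonoidHom Δ)

end SelfSim

/-! Let `G` be finitely presented and self-simulable, let `H` be coarsely equivalent to `G`, and let
`H` act effectively on `X`. Consider configurations over `G` that carry at each `g` a point `x_g` of
`X` together with its whole orbit, and finitely many bits which, when set, force relations
`b · x_g = s b' · x_{g t}`. They form an effectively closed action of `G`, hence a factor of a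
`G`-subshift of finite type `Z`. A subshift of finite type over `H` can carry a copy of the Cayley
graph of `G`, finitely many vertices over each element of `H`, labelled by a configuration of `Z`:
since `G` is finitely presented, it is a local condition that paths close up when they should. At
each `h` it also selects a vertex and so a point of `X`; the bits force the point at `h` to be `s`
times the point at `h s` for every generator `s`, so the point at `1` is an equivariant function of
the tiling. The coarse equivalence provides a tiling for each point of `X`. -/

namespace SelfSim

/-! ### Recursively enumerable predicates -/

section RecursivelyEnumerable

open Encodable

variable {α β : Type*} [Primcodable α] [Primcodable β] {p q : α → Prop}

theorem RE.exists_primrecRel (h : RE p) :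
    ∃ R : α → ℕ → Prop, PrimrecRel R ∧ (∀ a, Monotone (R a)) ∧ ∀ a, p a ↔ ∃ n, R a n := by
  obtain ⟨c, hc⟩ := Nat.Partrec.Code.exists_code.1 h
  have mem_eval (a : α) : (∃ x, x ∈ c.eval (encode a)) ↔ p a := by
    rw [congrFun hc (encode a)]
    simp
  refine ⟨fun a n => (c.evaln n (encode a)).isSome = true, ?_, ?_, fun a => ?_⟩
  · exact Primrec.eq.comp (Primrec.option_isSome.comp (Nat.Partrec.Code.primrec_evaln.comp
      ((Primrec.snd.pair (.const c)).pair (Primrec.encode.comp Primrec.fst)))) (.const true)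
  · intro a m n hmn hm
    obtain ⟨x, hx⟩ := Option.isSome_iff_exists.1 hm
    exact Option.isSome_iff_exists.2 ⟨x, Nat.Partrec.Code.evaln_mono hmn hx⟩
  · simp only [← mem_eval, Nat.Partrec.Code.evaln_complete, Option.isSome_iff_exists,
      Option.mem_def]
    exact exists_comm

theorem RE.of_exists_primrecRel {R : α → ℕ → Prop} (hR : PrimrecRel R)
    (hp : ∀ a, p a ↔ ∃ n, R a n) : RE p := by
  obtain ⟨dec, hR⟩ := hR
  let _ : ∀ a n, Decidable (R a n) := fun a n => dec (a, n)
  have search : Partrec fun a => Nat.rfind fun n => Part.some (decide (R a n)) :=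
    Partrec.rfind (Computable₂.partrec₂ (f := fun a n => decide (R a n)) hR.to_comp)
  refine REPred.of_eq search.dom_re fun a => ?_
  rw [hp]
  exact Nat.rfind_dom.trans (by simp)

theorem RE.of_primrecPred (h : PrimrecPred p) : RE p :=
  .of_exists_primrecRel (R := fun a _ => p a) (h.comp Primrec.fst) fun a => by simp

theorem RE.true : RE fun _ : α => True :=
  .of_primrecPred ⟨fun _ => .isTrue trivial, .const _⟩

theorem RE.of_iff (h : RE p) (e : ∀ a, p a ↔ q a) : RE q :=
  REPred.of_eq h e

theorem RE.comp {p : β → Prop} (h : RE p) {f : α → β} (hf : Primrec f) : RE fun a => p (f a) :=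
  Partrec.comp h hf.to_comp

theorem RE.and (hp : RE p) (hq : RE q) : RE fun a => p a ∧ q a := by
  obtain ⟨R, hR, hmono, hpR⟩ := hp.exists_primrecRel
  obtain ⟨S, hS, hmono', hqS⟩ := hq.exists_primrecRel
  refine .of_exists_primrecRel (R := fun a n => R a n ∧ S a n) (hR.and hS) fun a => ?_
  rw [hpR, hqS]
  constructor
  · rintro ⟨⟨n, hn⟩, k, hk⟩
    exact ⟨max n k, hmono _ (le_max_left _ _) hn, hmono' _ (le_max_right _ _) hk⟩
  · rintro ⟨n, hn, hn'⟩
    exact ⟨⟨n, hn⟩, n, hn'⟩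

theorem RE.or (hp : RE p) (hq : RE q) : RE fun a => p a ∨ q a := by
  obtain ⟨R, hR, -, hpR⟩ := hp.exists_primrecRel
  obtain ⟨S, hS, -, hqS⟩ := hq.exists_primrecRel
  exact .of_exists_primrecRel (R := fun a n => R a n ∨ S a n) (hR.or hS) fun a => by
    rw [hpR, hqS, exists_or]

theorem RE.exists {p : α → β → Prop} (h : RE fun x : α × β => p x.1 x.2) :
    RE fun a => ∃ b, p a b := by
  obtain ⟨R, hR, -, hpR⟩ := h.exists_primrecRel
  have hS : PrimrecRel fun (a : α) (n : ℕ) =>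
      ∃ b ∈ (decode n.unpair.1 : Option β).toList, R (a, b) n.unpair.2 := by
    have hR' : PrimrecRel fun (b : β) (x : α × ℕ) => R (x.1, b) x.2.unpair.2 :=
      hR.comp ((Primrec.fst.comp Primrec.snd).pair Primrec.fst)
        (Primrec.snd.comp (Primrec.unpair.comp (Primrec.snd.comp Primrec.snd)))
    exact hR'.exists_mem_list.comp (Primrec.optionToList.comp
      (Primrec.decode.comp (Primrec.fst.comp (Primrec.unpair.comp Primrec.snd)))) Primrec.id
  refine .of_exists_primrecRel hS fun a => ?_
  constructor
  · rintro ⟨b, hb⟩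
    obtain ⟨n, hn⟩ := (hpR (a, b)).1 hb
    exact ⟨Nat.pair (encode b) n, b, by simp, by simpa using hn⟩
  · rintro ⟨n, b, -, hb⟩
    exact ⟨b, (hpR (a, b)).2 ⟨_, hb⟩⟩

theorem RE.forall_mem_list {p : α → β → Prop} (h : RE fun x : α × β => p x.1 x.2)
    {l : α → List β} (hl : Primrec l) : RE fun a => ∀ b ∈ l a, p a b := by
  obtain ⟨R, hR, hmono, hpR⟩ := h.exists_primrecRel
  have hS : PrimrecRel fun (a : α) (n : ℕ) => ∀ b ∈ l a, R (a, b) n := by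
    have hR' : PrimrecRel fun (b : β) (x : α × ℕ) => R (x.1, b) x.2 :=
      hR.comp ((Primrec.fst.comp Primrec.snd).pair Primrec.fst) (Primrec.snd.comp Primrec.snd)
    exact hR'.forall_mem_list.comp (hl.comp Primrec.fst) Primrec.id
  refine .of_exists_primrecRel hS fun a => ⟨fun H => ?_, fun ⟨n, hn⟩ b hb =>
    (hpR (a, b)).2 ⟨n, hn b hb⟩⟩
  choose! stage hstage using fun b hb => (hpR (a, b)).1 (H b hb)
  have hbdd : BddAbove (stage '' {b | b ∈ l a}) := ((l a).finite_toSet.image stage).bddAbove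
  exact ⟨sSup (stage '' {b | b ∈ l a}), fun b hb =>
    hmono _ (le_csSup hbdd ⟨b, hb, rfl⟩) (hstage b hb)⟩

end RecursivelyEnumerable

/-! ### `Π⁰₁` classes -/

section Pi01

variable {κ κ' A : Type*}

/-- `y` takes the prescribed values on the finite pattern `c`, a list of (position, letter). -/
def Matches (y : κ → A) (c : List (κ × A)) : Prop :=
  ∀ q ∈ c, y q.1 = q.2

/-- `Π⁰₁` classes in `κ → A`: the sets cut out by a recursively enumerable family of forbidden
patterns. This is the notion of an effectively closed set for an arbitrary coded index type `κ`,
where `EffectivelyClosedSet` is tied to the index type `ℕ`. -/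
def IsPi01Class [Primcodable κ] [Primcodable A] (Z : Set (κ → A)) : Prop :=
  ∃ C : List (κ × A) → Prop, RE C ∧ Z = {y | ∀ c, C c → ¬ Matches y c}

theorem matches_map {y : κ' → A} {ρ : κ → κ'} {c : List (κ × A)} :
    Matches y (c.map fun q => (ρ q.1, q.2)) ↔ Matches (fun k => y (ρ k)) c := by
  simp only [Matches, List.forall_mem_map]

variable [Primcodable κ] [Primcodable κ'] [Primcodable A] {K : Type*} [Primcodable K]

theorem isPi01Class_forall_not_matches {P : K → Prop} (hP : RE P) {F : K → List (κ × A)}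
    (hF : Primrec F) : IsPi01Class {y : κ → A | ∀ k, P k → ¬ Matches y (F k)} := by
  refine ⟨fun c => ∃ k, P k ∧ F k = c, RE.exists ((hP.comp Primrec.snd).and
    (.of_primrecPred (Primrec.eq.comp (hF.comp Primrec.snd) Primrec.fst))), ?_⟩
  ext y
  simp

theorem IsPi01Class.inter {Z Z' : Set (κ → A)} (hZ : IsPi01Class Z) (hZ' : IsPi01Class Z') :
    IsPi01Class (Z ∩ Z') := by
  obtain ⟨C, hC, rfl⟩ := hZ
  obtain ⟨C', hC', rfl⟩ := hZ'
  refine ⟨fun c => C c ∨ C' c, hC.or hC', ?_⟩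
  ext y
  simp only [Set.mem_inter_iff, Set.mem_ofPred_eq, or_imp, forall_and]

theorem IsPi01Class.forall_comp {Z : Set (κ → A)} (hZ : IsPi01Class Z) {ρ : K → κ → κ'}
    (hρ : Primrec₂ ρ) : IsPi01Class {y : κ' → A | ∀ k, (fun i => y (ρ k i)) ∈ Z} := by
  obtain ⟨C, hC, rfl⟩ := hZ
  have hF : Primrec fun x : K × List (κ × A) => x.2.map fun q => (ρ x.1 q.1, q.2) :=
    Primrec.list_map Primrec.snd ((hρ.comp (Primrec.fst.comp Primrec.fst)
      (Primrec.fst.comp Primrec.snd)).pair (Primrec.snd.comp Primrec.snd))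
  convert isPi01Class_forall_not_matches (hC.comp Primrec.snd) hF using 1
  ext y
  simp only [Set.mem_ofPred_eq, Prod.forall, matches_map]

theorem isPi01Class_forall_matches_imp_eq {P : K → Prop} (hP : RE P) {L : K → List (κ × A)}
    (hL : Primrec L) {a b : K → κ} (ha : Primrec a) (hb : Primrec b) :
    IsPi01Class {y : κ → A | ∀ k, P k → Matches y (L k) → y (a k) = y (b k)} := by
  have hne : PrimrecPred fun x : K × A × A => x.2.1 ≠ x.2.2 :=
    (Primrec.eq.comp (Primrec.fst.comp Primrec.snd) (Primrec.snd.comp Primrec.snd)).not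
  have hF : Primrec fun x : K × A × A => (a x.1, x.2.1) :: (b x.1, x.2.2) :: L x.1 :=
    Primrec.list_cons.comp ((ha.comp Primrec.fst).pair (Primrec.fst.comp Primrec.snd))
      (Primrec.list_cons.comp ((hb.comp Primrec.fst).pair (Primrec.snd.comp Primrec.snd))
        (hL.comp Primrec.fst))
  convert isPi01Class_forall_not_matches
    ((hP.comp Primrec.fst).and (RE.of_primrecPred hne)) hF using 1
  ext y
  simp only [Set.mem_ofPred_eq, Matches, List.forall_mem_cons, Prod.forall, not_and, and_imp]
  constructor
  · rintro h k u v hk huv rfl rfl hy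
    exact huv (h k hk hy)
  · intro h k hk hy
    by_contra hne
    exact h k _ _ hk hne rfl rfl hy

theorem isPi01Class_forall_imp_eq {P : K → Prop} (hP : RE P) {a b : K → κ} (ha : Primrec a)
    (hb : Primrec b) : IsPi01Class {y : κ → A | ∀ k, P k → y (a k) = y (b k)} := by
  simpa [Matches] using
    isPi01Class_forall_matches_imp_eq (A := A) hP (L := fun _ : K => []) (Primrec.const _) ha hb

theorem isPi01Class_forall_eq {a b : K → κ} (ha : Primrec a) (hb : Primrec b) :
    IsPi01Class {y : κ → A | ∀ k, y (a k) = y (b k)} := by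
  simpa using isPi01Class_forall_imp_eq (A := A) .true ha hb

end Pi01

/-! ### Effectively closed sets of sequences are `Π⁰₁` classes -/

section EffectivelyClosed

variable {A : Type*}

theorem extendsWord_iff {y : ℕ → A} {w : List A} :
    ExtendsWord y w ↔ (List.range w.length).map y = w := by
  simp only [ExtendsWord, List.ext_getElem_iff, Fin.forall_iff, List.get_eq_getElem]
  simp

theorem isClopen_setOf_extendsWord [TopologicalSpace A] [DiscreteTopology A] (w : List A) :
    IsClopen {y : ℕ → A | ExtendsWord y w} := by
  simp only [ExtendsWord, Set.ofPred_forall]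
  exact isClopen_iInter_of_finite fun i =>
    (isClopen_discrete {w.get i}).preimage (continuous_apply (i : ℕ))

theorem isClopen_setOf_matches {κ : Type*} [TopologicalSpace A] [DiscreteTopology A]
    (c : List (κ × A)) : IsClopen {y : κ → A | Matches y c} := by
  have : {y : κ → A | Matches y c} = ⋂ q ∈ {q | q ∈ c}, {y | y q.1 = q.2} := by
    ext y
    simp [Matches]
  rw [this]
  exact c.finite_toSet.isClopen_biInter fun q _ =>
    (isClopen_discrete {q.2}).preimage (continuous_apply q.1)

theorem IsPi01Class.isClosed {κ : Type*} [Primcodable κ] [Primcodable A] [TopologicalSpace A]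
    [DiscreteTopology A] {Z : Set (κ → A)} (hZ : IsPi01Class Z) : IsClosed Z := by
  obtain ⟨C, -, rfl⟩ := hZ
  simp only [Set.ofPred_forall]
  exact isClosed_iInter fun c => isClosed_iInter fun _ => (isClopen_setOf_matches c).compl.1

theorem EffectivelyClosedSet.mem_iff [Primcodable A] [TopologicalSpace A] [DiscreteTopology A]
    {Z : Set (ℕ → A)} (hZ : EffectivelyClosedSet Z) {y : ℕ → A} :
    y ∈ Z ↔ ∀ w : List A, (∀ x, ExtendsWord x w → x ∉ Z) → ¬ ExtendsWord y w := by
  refine ⟨fun hy w hw hyw => hw y hyw hy, fun H => ?_⟩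
  by_contra hy
  obtain ⟨I, u, hu, hI⟩ := isOpen_pi_iff.1 hZ.1.isOpen_compl y hy
  obtain ⟨N, hN⟩ := I.bddAbove
  refine H ((List.range (N + 1)).map y) (fun x hx => hI fun i hi => ?_) (by simp [ExtendsWord])
  have hxy : x i = y i := by
    simpa using hx ⟨i, by simpa using Nat.lt_succ_of_le (hN hi)⟩
  exact hxy ▸ (hu i hi).2

theorem primrec_nthWords [Primcodable A] (l : List A) :
    Primrec fun N : ℕ => (fun L : List (List A) =>
      L.flatMap fun u => l.map fun a => a :: u)^[N] [[]] :=
  Primrec.nat_iterate Primrec.id (Primrec.const _) (Primrec.list_flatMap Primrec.snd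
    (Primrec.list_map (Primrec.const l)
      (Primrec.list_cons.comp Primrec.snd (Primrec.snd.comp Primrec.fst))))

theorem exists_primrec_words [Finite A] [Primcodable A] :
    ∃ W : ℕ → List (List A), Primrec W ∧ ∀ N u, u ∈ W N ↔ u.length = N := by
  have := Fintype.ofFinite A
  refine ⟨_, primrec_nthWords (Finset.univ : Finset A).toList, fun N => ?_⟩
  induction N with
  | zero => simp
  | succ N ih =>
    rintro (_ | ⟨a, u⟩)
    · simp [Function.iterate_succ_apply']
    · simp [Function.iterate_succ_apply', ih]

theorem RE.forall_word_of_length [Finite A] [Primcodable A] {α : Type*} [Primcodable α]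
    {p : α → List A → Prop} (h : RE fun x : α × List A => p x.1 x.2) {f : α → ℕ}
    (hf : Primrec f) : RE fun a => ∀ u : List A, u.length = f a → p a u := by
  obtain ⟨W, hW, mem_W⟩ := exists_primrec_words (A := A)
  simpa only [mem_W] using RE.forall_mem_list h (hW.comp hf)

variable {m : ℕ}

/-- Every sequence beginning with the word `w` matches the pattern `c`, as witnessed by `w` being
long enough to contain all positions of `c`. -/
def WordMatches (w : List (Fin m → A)) (c : List ((ℕ × Fin m) × A)) : Prop :=
  ∀ q ∈ c, w[q.1.1]?.map (· q.1.2) = some q.2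

theorem wordMatches_map_range {y : ℕ → Fin m → A} {N : ℕ} {c : List ((ℕ × Fin m) × A)} :
    WordMatches ((List.range N).map y) c ↔
      (∀ q ∈ c, q.1.1 < N) ∧ Matches (fun k : ℕ × Fin m => y k.1 k.2) c := by
  rw [WordMatches, Matches, ← forall₂_and]
  refine forall₂_congr fun q _ => ?_
  by_cases hq : q.1.1 < N <;> simp [hq]

theorem primrecRel_wordMatches [Primcodable A] :
    PrimrecRel fun (c : List ((ℕ × Fin m) × A)) (w : List (Fin m → A)) => WordMatches w c := by
  have hletter : PrimrecRel fun (q : (ℕ × Fin m) × A) (w : List (Fin m → A)) =>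
      w[q.1.1]?.map (· q.1.2) = some q.2 := by
    refine Primrec.eq.comp (Primrec.option_map (Primrec.list_getElem?.comp Primrec.snd
      (Primrec.fst.comp (Primrec.fst.comp Primrec.fst))) ?_)
      (Primrec.option_some.comp (Primrec.snd.comp Primrec.fst))
    exact Primrec.fin_app.comp Primrec.snd
      (Primrec.snd.comp (Primrec.fst.comp (Primrec.fst.comp Primrec.fst)))
  exact hletter.forall_mem_list

/-- The pattern prescribing all the letters of the word `w`. -/
def wordPattern [Inhabited A] (w : List (Fin m → A)) : List ((ℕ × Fin m) × A) :=
  (List.range w.length).flatMap fun n =>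
    (List.finRange m).map fun i => ((n, i), w.getD n default i)

theorem matches_wordPattern [Inhabited A] {y : ℕ → Fin m → A} {w : List (Fin m → A)} :
    Matches (fun k : ℕ × Fin m => y k.1 k.2) (wordPattern w) ↔ ExtendsWord y w := by
  simp only [Matches, wordPattern, List.mem_flatMap, List.mem_range, List.mem_map,
    List.mem_finRange, true_and, ExtendsWord, List.get_eq_getElem]
  constructor
  · intro h n
    funext i
    simpa using h ((n, i), w.getD n default i) ⟨n, n.2, i, rfl⟩
  · rintro h _ ⟨n, hn, i, rfl⟩
    simpa [hn] using congrFun (h ⟨n, hn⟩) i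

theorem primrec_wordPattern [Primcodable A] [Inhabited A] :
    Primrec (wordPattern : List (Fin m → A) → _) := by
  refine Primrec.list_flatMap (Primrec.list_range.comp Primrec.list_length)
    (Primrec.list_map (Primrec.const _) ?_)
  exact ((Primrec.snd.comp Primrec.fst).pair Primrec.snd).pair (Primrec.fin_app.comp
    ((Primrec.list_getD default).comp (Primrec.fst.comp Primrec.fst)
      (Primrec.snd.comp Primrec.fst)) Primrec.snd)

theorem EffectivelyClosedSet.isPi01Class [Primcodable A] [Inhabited A] [TopologicalSpace A]
    [DiscreteTopology A] {Z : Set (ℕ → Fin m → A)} (hZ : EffectivelyClosedSet Z) :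
    IsPi01Class {y : ℕ × Fin m → A | (fun n i => y (n, i)) ∈ Z} := by
  convert isPi01Class_forall_not_matches hZ.2 primrec_wordPattern using 1
  ext y
  simp only [Set.mem_ofPred_eq]
  rw [hZ.mem_iff]
  exact forall₂_congr fun w _ => (not_congr matches_wordPattern).symm

variable [TopologicalSpace A] [DiscreteTopology A]

theorem isOpen_setOf_exists_wordMatches (C : List ((ℕ × Fin m) × A) → Prop) (N : ℕ) :
    IsOpen {y : ℕ → Fin m → A | ∃ c, C c ∧ WordMatches ((List.range N).map y) c} := by
  simp only [Set.ofPred_exists, wordMatches_map_range]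
  refine isOpen_iUnion fun c => isOpen_const.inter (isOpen_const.inter ?_)
  exact (isClopen_setOf_matches c).2.preimage
    (f := fun (y : ℕ → Fin m → A) (k : ℕ × Fin m) => y k.1 k.2) (by fun_prop)

variable [Finite A]

theorem exists_forall_extendsWord_wordMatches {C : List ((ℕ × Fin m) × A) → Prop}
    {w : List (Fin m → A)} (H : ∀ y : ℕ → Fin m → A, ExtendsWord y w →
      ∃ c, C c ∧ Matches (fun k : ℕ × Fin m => y k.1 k.2) c) :
    ∃ N, ∀ y : ℕ → Fin m → A, ExtendsWord y w →
      ∃ c, C c ∧ WordMatches ((List.range N).map y) c := by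
  refine (isClopen_setOf_extendsWord w).1.isCompact.elim_directed_cover _
    (isOpen_setOf_exists_wordMatches C) (fun y hy => ?_) (Monotone.directed_le ?_)
  · obtain ⟨c, hc, hyc⟩ := H y hy
    obtain ⟨N, hN⟩ := (c.finite_toSet.image fun q => q.1.1).bddAbove
    exact Set.mem_iUnion.2 ⟨N + 1, c, hc, wordMatches_map_range.2
      ⟨fun q hq => Nat.lt_succ_of_le (hN ⟨q, hq, rfl⟩), hyc⟩⟩
  · rintro M N hMN y ⟨c, hc, hyc⟩
    rw [wordMatches_map_range] at hyc
    exact ⟨c, hc, wordMatches_map_range.2 ⟨fun q hq => (hyc.1 q hq).trans_le hMN, hyc.2⟩⟩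

theorem forall_extendsWord_exists_matches_iff [Inhabited A]
    {C : List ((ℕ × Fin m) × A) → Prop} {w : List (Fin m → A)} :
    (∀ y : ℕ → Fin m → A, ExtendsWord y w →
        ∃ c, C c ∧ Matches (fun k : ℕ × Fin m => y k.1 k.2) c) ↔
      ∃ N, ∀ u, u.length = N → ∃ c, C c ∧ WordMatches (w ++ u) c := by
  constructor
  · intro H
    obtain ⟨N, hN⟩ := exists_forall_extendsWord_wordMatches H
    refine ⟨N, fun u hu => ?_⟩
    have hy : (List.range (w.length + N)).map (fun n => (w ++ u).getD n default) = w ++ u :=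
      List.ext_getElem (by simp [hu]) fun n _ hn => by
        rw [List.getElem_map, List.getElem_range, List.getD_eq_getElem _ _ hn]
    obtain ⟨c, hc, hcN⟩ := hN (fun n => (w ++ u).getD n default) fun i => by
      change (w ++ u).getD i default = w.get i
      rw [List.getD_append _ _ _ _ i.2, List.getD_eq_getElem _ _ i.2, List.get_eq_getElem]
    refine ⟨c, hc, ?_⟩
    rw [← hy, wordMatches_map_range]
    rw [wordMatches_map_range] at hcN
    exact ⟨fun q hq => (hcN.1 q hq).trans_le (Nat.le_add_left N _), hcN.2⟩
  · rintro ⟨N, hN⟩ y hy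
    obtain ⟨c, hc, hcN⟩ := hN ((List.range N).map fun n => y (w.length + n)) (by simp)
    have hwN : w ++ (List.range N).map (fun n => y (w.length + n)) =
        (List.range (w.length + N)).map y := by
      rw [List.range_add, List.map_append, extendsWord_iff.1 hy, List.map_map]
      rfl
    rw [hwN, wordMatches_map_range] at hcN
    exact ⟨c, hc, hcN.2⟩

theorem IsPi01Class.effectivelyClosedSet [Primcodable A] [Inhabited A] {Z : Set (ℕ → Fin m → A)}
    (hZ : IsPi01Class {y : ℕ × Fin m → A | (fun n i => y (n, i)) ∈ Z}) :
    EffectivelyClosedSet Z := by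
  have hclosed : IsClosed Z :=
    hZ.isClosed.preimage (f := fun (y : ℕ → Fin m → A) (k : ℕ × Fin m) => y k.1 k.2)
      (by fun_prop)
  obtain ⟨C, hC, hZC⟩ := hZ
  have mem_Z (y : ℕ → Fin m → A) :
      y ∈ Z ↔ ∀ c, C c → ¬ Matches (fun k : ℕ × Fin m => y k.1 k.2) c :=
    Set.ext_iff.1 hZC fun k => y k.1 k.2
  have hword : RE fun x : (List (Fin m → A) × ℕ) × List (Fin m → A) =>
      ∃ c, C c ∧ WordMatches (x.1.1 ++ x.2) c :=
    RE.exists ((hC.comp Primrec.snd).and (.of_primrecPred (primrecRel_wordMatches.comp Primrec.snd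
      (Primrec.list_append.comp (Primrec.fst.comp (Primrec.fst.comp Primrec.fst))
        (Primrec.snd.comp Primrec.fst)))))
  refine ⟨hclosed, RE.of_iff (RE.exists (p := fun w N => ∀ u : List (Fin m → A), u.length = N →
    ∃ c, C c ∧ WordMatches (w ++ u) c) (hword.forall_word_of_length Primrec.snd)) fun w => ?_⟩
  simp only [mem_Z, not_forall, not_not, exists_prop]
  exact forall_extendsWord_exists_matches_iff.symm

end EffectivelyClosed

/-! ### Finite presentations -/

section Presentation

variable {ι G γ : Type*} [Group G]

/-- A finite presentation of `G` as a monoid, together with a choice of a word for each element.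
The last field says that the relators generate the congruence of all relations between words. -/
structure FinPresentation (ι G : Type*) [Group G] where
  /-- The element of `G` named by a letter. -/
  gen : ι → G
  /-- The defining relators. -/
  relators : Finset (List ι)
  /-- A word representing a given element. -/
  word : G → List ι
  prod_word : ∀ g, ((word g).map gen).prod = g
  prod_relator : ∀ r ∈ relators, (r.map gen).prod = 1
  conGen_of_prod_eq : ∀ u v : FreeMonoid ι,
    (u.toList.map gen).prod = (v.toList.map gen).prod →
      conGen (fun a b : FreeMonoid ι => a.toList ∈ relators ∧ b = 1) u v

namespace FinPresentation

/-- The element of `G` represented by a word. -/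
def eval (P : FinPresentation ι G) (w : List ι) : G := (w.map P.gen).prod

variable (P : FinPresentation ι G)

@[simp] theorem eval_nil : P.eval [] = 1 := rfl

@[simp] theorem eval_cons (i : ι) (w : List ι) : P.eval (i :: w) = P.gen i * P.eval w := by
  simp [eval]

@[simp] theorem eval_append (u v : List ι) : P.eval (u ++ v) = P.eval u * P.eval v := by
  simp [eval]

@[simp] theorem eval_word (g : G) : P.eval (P.word g) = g := P.prod_word g

theorem eval_eq_one {r : List ι} (hr : r ∈ P.relators) : P.eval r = 1 := P.prod_relator r hr

/-- The syntactic congruence of `f`: two words are related if `f` cannot tell them apart in any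
context. -/
def syntacticCon (f : List ι → γ) : Con (FreeMonoid ι) where
  r a b := ∀ u v, f (u ++ a.toList ++ v) = f (u ++ b.toList ++ v)
  iseqv := ⟨fun _ _ _ => rfl, fun h u v => (h u v).symm, fun h h' u v => (h u v).trans (h' u v)⟩
  mul' {a b c d} hab hcd u v := by
    simpa [List.append_assoc] using (hab u (c.toList ++ v)).trans
      (by simpa [List.append_assoc] using hcd (u ++ b.toList) v)

theorem eq_of_eval_eq {f : List ι → γ}
    (hf : ∀ r ∈ P.relators, ∀ u v, f (u ++ r ++ v) = f (u ++ v)) {w w' : List ι}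
    (hw : P.eval w = P.eval w') : f w = f w' := by
  have hle : conGen (fun a b : FreeMonoid ι => a.toList ∈ P.relators ∧ b = 1) ≤
      syntacticCon f := by
    refine Con.conGen_le.2 ?_
    rintro a _ ⟨ha, rfl⟩ u v
    simpa using hf _ ha u v
  simpa using hle (P.conGen_of_prod_eq (FreeMonoid.ofList w) (FreeMonoid.ofList w') hw) [] []

end FinPresentation

section FreeGroup

variable {α : Type*} {rels : FreeMonoid (α × Bool) → FreeMonoid (α × Bool) → Prop}

/-- If the relations `rels` make the letters `(a, true)` and `(a, false)` mutually inverse, then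
the monoid they present receives a homomorphism from the free group. -/
def freeGroupToUnits
    (hrels : ∀ p : α × Bool, conGen rels (FreeMonoid.ofList [p, (p.1, !p.2)]) 1) :
    FreeGroup α →* (PresentedMonoid rels)ˣ :=
  FreeGroup.lift fun a => ⟨.of rels (a, true), .of rels (a, false),
    (Con.eq _).2 (hrels (a, true)), (Con.eq _).2 (hrels (a, false))⟩

theorem freeGroupToUnits_mk
    (hrels : ∀ p : α × Bool, conGen rels (FreeMonoid.ofList [p, (p.1, !p.2)]) 1)
    (w : List (α × Bool)) :
    (freeGroupToUnits hrels (FreeGroup.mk w) : PresentedMonoid rels) =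
      PresentedMonoid.mk rels (FreeMonoid.ofList w) := by
  induction w with
  | nil => rfl
  | cons p w ih =>
    have hp : FreeGroup.mk (p :: w) = FreeGroup.mk [p] * FreeGroup.mk w := rfl
    rw [hp, map_mul, Units.val_mul, ih, FreeMonoid.ofList_cons, map_mul]
    congr 1
    obtain ⟨a, _ | _⟩ := p <;> simp [freeGroupToUnits, PresentedMonoid.of, PresentedMonoid.mk]

end FreeGroup

theorem map_mk_eq_prod {α : Type*} (f : FreeGroup α →* G) (w : List (α × Bool)) :
    f (FreeGroup.mk w) = (w.map fun p => f (FreeGroup.mk [p])).prod := by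
  induction w with
  | nil => exact map_one f
  | cons p w ih => rw [List.map_cons, List.prod_cons, ← ih, ← map_mul]; rfl

/-- The relators of `R`, as words, together with the relators cancelling a letter against its
formal inverse. -/
def monoidRelators {α : Type*} [DecidableEq α] [Fintype α] (R : Finset (FreeGroup α)) :
    Finset (List (α × Bool)) :=
  Finset.univ.image (fun p : α × Bool => [p, (p.1, !p.2)]) ∪ R.image FreeGroup.toWord

theorem conGen_monoidRelators {α : Type*} [DecidableEq α] [Fintype α] {f : FreeGroup α →* G}
    {R : Finset (FreeGroup α)} (hker : f.ker = Subgroup.normalClosure (R : Set (FreeGroup α)))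
    {u v : List (α × Bool)} (huv : f (FreeGroup.mk u) = f (FreeGroup.mk v)) :
    conGen (fun a b : FreeMonoid (α × Bool) => a.toList ∈ monoidRelators R ∧ b = 1)
      (FreeMonoid.ofList u) (FreeMonoid.ofList v) := by
  have hrels (p : α × Bool) : conGen
      (fun a b : FreeMonoid (α × Bool) => a.toList ∈ monoidRelators R ∧ b = 1)
      (FreeMonoid.ofList [p, (p.1, !p.2)]) 1 :=
    ConGen.Rel.of _ _ ⟨by simp [monoidRelators], rfl⟩
  have hle : f.ker ≤ (freeGroupToUnits hrels).ker := by
    rw [hker]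
    refine Subgroup.normalClosure_le_normal fun r hr => Units.ext ?_
    rw [← FreeGroup.mk_toWord (x := r), freeGroupToUnits_mk]
    exact (Con.eq _).2 (ConGen.Rel.of _ _
      ⟨Finset.mem_union_right _ (Finset.mem_image_of_mem _ hr), rfl⟩)
  have hφ := (MonoidHom.eq_iff _).2 (hle ((MonoidHom.eq_iff _).1 huv))
  refine (Con.eq _).1 ?_
  exact (freeGroupToUnits_mk hrels u).symm.trans
    ((congrArg Units.val hφ).trans (freeGroupToUnits_mk hrels v))

theorem FinitelyPresentedGroup.exists_finPresentation (hG : FinitelyPresentedGroup G) :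
    ∃ m : ℕ, Nonempty (FinPresentation (Fin m × Bool) G) := by
  obtain ⟨m, f, R, hf, hker⟩ := hG
  choose lift hlift using hf
  refine ⟨m, ⟨{
    gen p := f (FreeGroup.mk [p])
    relators := monoidRelators R
    word g := (lift g).toWord
    prod_word g := by rw [← map_mk_eq_prod, FreeGroup.mk_toWord, hlift]
    prod_relator := ?_
    conGen_of_prod_eq u v huv := conGen_monoidRelators hker ?_ }⟩⟩
  · intro r hr
    rw [← map_mk_eq_prod]
    simp only [monoidRelators, Finset.mem_union, Finset.mem_image, Finset.mem_univ,
      true_and] at hr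
    obtain ⟨p, rfl⟩ | ⟨r, hr, rfl⟩ := hr
    · rw [← map_one f, FreeGroup.one_eq_mk]
      exact congrArg f (Quot.sound (FreeGroup.Red.Step.not (L₁ := []) (L₂ := [])))
    · rw [FreeGroup.mk_toWord, ← MonoidHom.mem_ker, hker]
      exact Subgroup.subset_normalClosure hr
  · rwa [← map_mk_eq_prod, ← map_mk_eq_prod] at huv

end Presentation

/-! ### Coarse equivalences -/

section Coarse

variable {α β ι G H : Type*} [Group G] [Group H]

theorem closure_range_eq_top_iff {s : ι → G} :
    Submonoid.closure (Set.range s) = ⊤ ↔ ∀ g, ∃ w : List ι, (w.map s).prod = g := by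
  rw [← FreeMonoid.mrange_lift, MonoidHom.mrange_eq_top]
  simp only [Function.Surjective, FreeMonoid.lift_apply]
  rfl

/-- Two maps into `G` are close if they differ by right multiplication by elements of a finite set.
Unlike a bound on `wordDist`, this is visibly symmetric and independent of generators. -/
def Close (a b : α → G) : Prop :=
  (Set.range fun x => (a x)⁻¹ * b x).Finite

theorem Close.symm {a b : α → G} (h : Close a b) : Close b a := by
  refine (Set.Finite.inv h).subset ?_
  rintro _ ⟨x, rfl⟩
  exact ⟨x, by simp⟩

theorem Close.trans {a b c : α → G} (hab : Close a b) (hbc : Close b c) : Close a c := by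
  refine (Set.Finite.mul hab hbc).subset ?_
  rintro _ ⟨x, rfl⟩
  exact ⟨_, ⟨x, rfl⟩, _, ⟨x, rfl⟩, by group⟩

theorem Close.comp {a b : α → G} (h : Close a b) (u : β → α) :
    Close (fun x => a (u x)) fun x => b (u x) :=
  Set.Finite.subset h (Set.range_comp_subset_range u fun x => (a x)⁻¹ * b x)

theorem close_mul_right (a : α → G) (t : G) : Close a fun x => a x * t :=
  (Set.finite_singleton t).subset <| by
    rintro _ ⟨x, rfl⟩
    simp

theorem wordDist_le_iff {m : ℕ} {s : Fin m → G} (hs : Submonoid.closure (Set.range s) = ⊤)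
    {g h : G} {n : ℕ} :
    wordDist s g h ≤ n ↔ ∃ w : List (Fin m), w.length ≤ n ∧ (w.map s).prod = g⁻¹ * h := by
  constructor
  · intro hn
    obtain ⟨u, hu⟩ := closure_range_eq_top_iff.1 hs (g⁻¹ * h)
    have hne : {n | ∃ w : List (Fin m), w.length = n ∧ (w.map s).prod = g⁻¹ * h}.Nonempty :=
      ⟨_, u, rfl, hu⟩
    obtain ⟨w, hw, hgh⟩ := Nat.sInf_mem hne
    exact ⟨w, hw.trans_le hn, hgh⟩
  · rintro ⟨w, hw, hgh⟩
    refine le_trans (Nat.sInf_le ?_) hw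
    exact ⟨w, rfl, hgh⟩

theorem close_iff_wordDist_le {m : ℕ} {s : Fin m → G}
    (hs : Submonoid.closure (Set.range s) = ⊤) {a b : α → G} :
    Close a b ↔ ∃ r : ℝ, ∀ x, (wordDist s (a x) (b x) : ℝ) ≤ r := by
  constructor
  · intro h
    obtain ⟨r, hr⟩ := (h.image fun g => (wordDist s 1 g : ℝ)).bddAbove
    refine ⟨r, fun x => ?_⟩
    simpa [wordDist] using hr ⟨_, ⟨x, rfl⟩, rfl⟩
  · rintro ⟨r, hr⟩
    obtain ⟨n, hn⟩ := exists_nat_ge r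
    refine ((List.finite_length_le (Fin m) n).image fun w => (w.map s).prod).subset ?_
    rintro _ ⟨x, rfl⟩
    obtain ⟨w, hw, hx⟩ := (wordDist_le_iff hs).1 (Nat.cast_le.1 ((hr x).trans hn))
    exact ⟨w, hw, hx⟩

theorem Close.of_wordDist_le {m n : ℕ} {s : Fin m → G} {t : Fin n → H}
    (hs : Submonoid.closure (Set.range s) = ⊤) (ht : Submonoid.closure (Set.range t) = ⊤)
    {ρ : ℝ → ℝ} (hρ : Monotone ρ) {a b : α → G} {a' b' : α → H} (h : Close a' b')
    (hle : ∀ x, (wordDist s (a x) (b x) : ℝ) ≤ ρ (wordDist t (a' x) (b' x))) : Close a b := by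
  obtain ⟨r, hr⟩ := (close_iff_wordDist_le ht).1 h
  exact (close_iff_wordDist_le hs).2 ⟨ρ r, fun x => (hle x).trans (hρ (hr x))⟩

/-- A coarse equivalence between groups: both maps send right translations to maps close to them,
and they are mutually inverse up to closeness. -/
structure CoarseEquiv (G H : Type*) [Group G] [Group H] where
  /-- The map from the first group to the second. -/
  toFun : G → H
  /-- The coarse inverse. -/
  invFun : H → G
  close_toFun : ∀ t, Close toFun fun g => toFun (g * t)
  close_invFun : ∀ t, Close invFun fun h => invFun (h * t)
  left_inv : Close (fun g => invFun (toFun g)) id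
  right_inv : Close (fun h => toFun (invFun h)) id

/-- The inverse of a coarse equivalence. -/
def CoarseEquiv.symm (c : CoarseEquiv G H) : CoarseEquiv H G :=
  ⟨c.invFun, c.toFun, c.close_invFun, c.close_toFun, c.right_inv, c.left_inv⟩

theorem QuasiIsometric.nonempty_coarseEquiv (hGH : QuasiIsometric G H) :
    Nonempty (CoarseEquiv H G) := by
  obtain ⟨m, s, n, t, hs, ht, f, A, B, C, hA, -, -, hf, hsurj⟩ := hGH
  choose f' hf' using hsurj
  have hA0 : 0 < A := zero_lt_one.trans_le hA
  have upper_mono : Monotone fun r => A * r + B := fun _ _ h => by dsimp only; gcongr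
  have lower_mono : Monotone fun r => A * (r + B) := fun _ _ h => by dsimp only; gcongr
  have lower (x y : H) : (wordDist t x y : ℝ) ≤ A * (wordDist s (f x) (f y) + B) := by
    have hxy := (hf x y).1
    rwa [one_div, sub_le_iff_le_add, inv_mul_le_iff₀ hA0] at hxy
  have right_inv : Close (fun g => f (f' g)) id :=
    Close.symm ((close_iff_wordDist_le hs).2 ⟨C, hf'⟩)
  have close_invFun (g : G) : Close (fun x => f (f' x)) fun x => f (f' (x * g)) :=
    (right_inv.trans (close_mul_right id g)).trans (right_inv.symm.comp (· * g))
  exact ⟨{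
    toFun := f
    invFun := f'
    close_toFun h := (close_mul_right id h).of_wordDist_le hs ht upper_mono fun _ => (hf _ _).2
    close_invFun g := (close_invFun g).of_wordDist_le ht hs lower_mono fun _ => lower _ _
    left_inv := (right_inv.comp f).of_wordDist_le ht hs lower_mono fun _ => lower _ _
    right_inv := right_inv }⟩

end Coarse

/-! ### Locally constant maps and subshifts of finite type -/

section LocallyConstant

variable {X γ δ ι : Type*} [TopologicalSpace X]

theorem isLocallyConstant_of_forall_apply [Finite ι] {f : X → ι → γ}
    (hf : ∀ i, IsLocallyConstant fun x => f x i) : IsLocallyConstant f := by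
  rw [IsLocallyConstant.iff_eventually_eq]
  intro x
  filter_upwards [Filter.eventually_all.2 fun i => (hf i).eventually_eq x] with y hy
  exact funext hy

theorem isLocallyConstant_forall [Finite ι] {p : X → ι → Prop}
    (hp : ∀ i, IsLocallyConstant fun x => p x i) : IsLocallyConstant fun x => ∀ i, p x i :=
  (isLocallyConstant_of_forall_apply hp).comp fun q => ∀ i, q i

theorem isLocallyConstant_exists [Finite ι] {p : X → ι → Prop}
    (hp : ∀ i, IsLocallyConstant fun x => p x i) : IsLocallyConstant fun x => ∃ i, p x i :=
  (isLocallyConstant_of_forall_apply hp).comp fun q => ∃ i, q i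

theorem isLocallyConstant_apply {A : Type*} [TopologicalSpace A] [DiscreteTopology A] (i : ι) :
    IsLocallyConstant fun x : ι → A => x i :=
  (IsLocallyConstant.iff_continuous _).2 (continuous_apply i)

theorem continuous_apply_isLocallyConstant [TopologicalSpace γ] {c : X → δ} {f : δ → X → γ}
    (hc : IsLocallyConstant c) (hf : ∀ d, Continuous (f d)) : Continuous fun x => f (c x) x := by
  refine continuous_iff_continuousAt.2 fun x => (hf (c x)).continuousAt.congr ?_
  filter_upwards [hc.eventually_eq x] with y hy
  rw [hy]

theorem isLocallyConstant_apply_isLocallyConstant {c : X → δ} {f : δ → X → γ}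
    (hc : IsLocallyConstant c) (hf : ∀ d, IsLocallyConstant (f d)) :
    IsLocallyConstant fun x => f (c x) x := by
  rw [IsLocallyConstant.iff_eventually_eq]
  intro x
  filter_upwards [hc.eventually_eq x, (hf (c x)).eventually_eq x] with y hc hf
  rw [hc, hf]

variable [CompactSpace X] [T2Space X] [TotallyDisconnectedSpace X] {Z : Set X}

theorem exists_continuous_eqOn_bool (hZ : IsClosed Z) {f : X → Bool} (hf : ContinuousOn f Z) :
    ∃ g : X → Bool, Continuous g ∧ Set.EqOn g f Z := by
  have hclosed (b : Bool) : IsClosed (Z ∩ f ⁻¹' {b}) :=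
    hf.preimage_isClosed_of_isClosed hZ (isClosed_discrete _)
  obtain ⟨C, hC, hle, hge⟩ := exists_clopen_of_closed_subset_open (hclosed true)
    (hclosed false).isOpen_compl fun x hx hx' => by simp_all
  refine ⟨C.boolIndicator, (continuous_boolIndicator_iff_isClopen C).2 hC, fun x hx => ?_⟩
  cases hfx : f x with
  | true => exact (Set.mem_iff_boolIndicator C x).1 (hle ⟨hx, hfx⟩)
  | false => exact (Set.notMem_iff_boolIndicator C x).1 fun hxC => hge hxC ⟨hx, hfx⟩

theorem exists_continuous_eqOn_pi_bool (hZ : IsClosed Z) {f : X → ι → Bool}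
    (hf : ContinuousOn f Z) : ∃ g : X → ι → Bool, Continuous g ∧ Set.EqOn g f Z := by
  choose g hg hgf using fun i =>
    exists_continuous_eqOn_bool hZ ((continuous_apply i).comp_continuousOn hf)
  exact ⟨fun x i => g i x, continuous_pi hg, fun x hx => funext fun i => hgf i hx⟩

end LocallyConstant

section Shift

variable {G A : Type*} [Group G]

@[simp] theorem shift_one (x : G → A) : shift 1 x = x := by
  funext h
  simp [shift]

theorem shift_mul (g h : G) (x : G → A) : shift (g * h) x = shift g (shift h x) := by
  funext a
  simp [shift, mul_assoc]

theorem isFactorOfSFT_of_finite [Finite A] [TopologicalSpace A] {Z : Set (G → A)} (hZ : IsSFT Z)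
    {φ : (G → A) → ℕ → Bool} {act : G → (ℕ → Bool) → ℕ → Bool} {X : Set (ℕ → Bool)}
    (hφ : IsFactorMapOnto Z φ act X) : IsFactorOfSFT act X := by
  obtain ⟨k, ⟨e⟩⟩ := Finite.exists_equiv_fin A
  obtain ⟨F, L, hL⟩ := hZ
  obtain ⟨hcont, hmaps, hsurj, hequiv⟩ := hφ
  have he : Continuous fun z : G → Fin k => e.symm ∘ z :=
    continuous_pi fun g => continuous_of_discreteTopology.comp (continuous_apply g)
  refine ⟨k, {z | e.symm ∘ z ∈ Z}, fun z => φ (e.symm ∘ z),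
    ⟨F, {p | e.symm ∘ p ∈ L}, fun z => hL _⟩, hcont.comp he.continuousOn fun _ => id,
    fun z hz => hmaps hz, fun y hy => ?_, fun g z hz => hequiv g _ hz⟩
  obtain ⟨z, hz, rfl⟩ := hsurj hy
  have hez : e.symm ∘ e ∘ z = z := by simp [← Function.comp_assoc]
  exact ⟨e ∘ z, by simpa [hez] using hz, by simp only [hez]⟩

variable [TopologicalSpace A]

@[fun_prop] theorem continuous_shift (g : G) : Continuous (shift g : (G → A) → G → A) :=
  continuous_pi fun h => continuous_apply (g⁻¹ * h)

variable [DiscreteTopology A]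

theorem exists_finset_dependsOn {ι γ : Type*} [Finite A] {f : (ι → A) → γ}
    (hf : IsLocallyConstant f) : ∃ F : Finset ι, DependsOn f F := by
  classical
  have hlocal (x : ι → A) : ∃ F : Finset ι, ∀ y, (∀ i ∈ F, y i = x i) → f y = f x := by
    obtain ⟨U, hU, hxU, hfU⟩ := hf.exists_open x
    obtain ⟨F, u, hu, hF⟩ := isOpen_pi_iff.1 hU x hxU
    exact ⟨F, fun y hy => hfU y (hF fun i hi => hy i hi ▸ (hu i hi).2)⟩
  choose F hF using hlocal
  obtain ⟨t, ht⟩ := CompactSpace.elim_nhds_subcover (fun x => Set.pi (F x : Set ι) fun i => {x i})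
    fun x => set_pi_mem_nhds (F x).finite_toSet fun i _ => by simp
  refine ⟨t.biUnion F, fun x y hxy => ?_⟩
  obtain ⟨z, hz, hxz⟩ := Set.mem_iUnion₂.1 (ht.ge (Set.mem_univ x))
  have hyz : ∀ i ∈ F z, y i = z i := fun i hi =>
    (hxy i (Finset.mem_coe.2 (Finset.mem_biUnion.2 ⟨z, hz, hi⟩))).symm.trans (hxz i hi)
  exact (hF z x hxz).trans (hF z y hyz).symm

theorem isSFT_of_isLocallyConstant [Finite A] {p : (G → A) → G → Prop}
    (hp : ∀ g x h, p (shift g x) (g * h) ↔ p x h) (hp1 : IsLocallyConstant fun x => p x 1) :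
    IsSFT {x | ∀ h, p x h} := by
  obtain ⟨F, hF⟩ := exists_finset_dependsOn hp1
  refine ⟨F, {q | ∃ x, p x 1 ∧ ∀ h : F, q h = x h}, fun x => forall_congr' fun g => ?_⟩
  have hpg : p x g ↔ p (shift g⁻¹ x) 1 := by rw [← hp g⁻¹, inv_mul_cancel]
  rw [hpg]
  constructor
  · exact fun hx => ⟨_, hx, fun h => by simp [shift]⟩
  · rintro ⟨y, hy, hxy⟩
    exact (hF (y := y) fun h hh => by simpa [shift] using hxy ⟨h, hh⟩).mpr hy

theorem IsSFT.exists_isLocallyConstant {Z : Set (G → A)} (hZ : IsSFT Z) :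
    ∃ p : (G → A) → Prop, IsLocallyConstant p ∧ Z = {x | ∀ g, p (shift g x)} := by
  obtain ⟨F, L, hL⟩ := hZ
  refine ⟨fun x => (fun h : F => x h) ∈ L, ?_, ?_⟩
  · exact (isLocallyConstant_of_forall_apply fun h : F =>
      isLocallyConstant_apply (A := A) (h : G)).comp (· ∈ L)
  · ext x
    rw [hL]
    refine (Equiv.inv G).forall_congr fun g => ?_
    simp [shift]

theorem IsSFT.isSubshift {Z : Set (G → A)} (hZ : IsSFT Z) : IsSubshift Z := by
  obtain ⟨p, hp, rfl⟩ := hZ.exists_isLocallyConstant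
  refine ⟨?_, fun g x hx h => shift_mul h g x ▸ hx (h * g)⟩
  simp only [Set.ofPred_forall]
  refine isClosed_iInter fun g => ?_
  simpa using (hp.isClosed_fiber True).preimage (continuous_shift g)

end Shift

/-! ### Coding shift spaces over a group by sequences -/

section Coding

open Encodable

variable {ι I G A : Type*} [Group G]

/-- The element of `κ` with code `n`, or a default element if there is none. -/
def codeIndex {κ : Type*} [Primcodable κ] [Inhabited κ] (n : ℕ) : κ := (decode n).getD default

@[simp] theorem codeIndex_encode {κ : Type*} [Primcodable κ] [Inhabited κ] (k : κ) :
    codeIndex (encode k) = k := by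
  simp [codeIndex]

theorem primrec_codeIndex {κ : Type*} [Primcodable κ] [Inhabited κ] :
    Primrec (codeIndex : ℕ → κ) :=
  Primrec.option_getD.comp Primrec.decode (Primrec.const default)

namespace FinPresentation

variable (P : FinPresentation ι G)

theorem closure_range_gen : Submonoid.closure (Set.range P.gen) = ⊤ :=
  closure_range_eq_top_iff.2 fun g => ⟨P.word g, P.prod_word g⟩

theorem exists_generating_tuple (P : FinPresentation ι G) [Finite ι] :
    ∃ (m : ℕ) (t : Fin m → G), (∃ i, t i = 1) ∧ Submonoid.closure (Set.range t) = ⊤ := by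
  obtain ⟨m, ⟨e⟩⟩ := Finite.exists_equiv_fin (Option ι)
  refine ⟨m, fun i => (e.symm i).elim 1 P.gen, ⟨e none, by simp⟩, top_le_iff.1 ?_⟩
  rw [← P.closure_range_gen]
  refine Submonoid.closure_mono ?_
  rintro _ ⟨i, rfl⟩
  exact ⟨e (some i), by simp⟩

/-- A configuration over `G`, read as a function of words. -/
def onWords (c : G → I → A) : List ι × I → A := fun k => c (P.eval k.1) k.2

theorem mem_range_onWords {y : List ι × I → A} : y ∈ Set.range P.onWords ↔
    ∀ r ∈ P.relators, ∀ u v q, y (u ++ r ++ v, q) = y (u ++ v, q) := by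
  constructor
  · rintro ⟨c, rfl⟩ r hr u v q
    simp [onWords, P.eval_eq_one hr]
  · refine fun h => ⟨fun g q => y (P.word g, q), funext fun k => ?_⟩
    exact P.eq_of_eval_eq (f := fun w => y (w, k.2)) (fun r hr u v => h r hr u v k.2)
      (P.eval_word _)

variable [Primcodable ι] [Primcodable I]

theorem isPi01Class_range_onWords [Primcodable A] :
    IsPi01Class (Set.range (P.onWords : (G → I → A) → List ι × I → A)) := by
  have hrel : RE fun k : List ι × List ι × List ι × I => k.1 ∈ P.relators := by
    refine .of_primrecPred (PrimrecPred.of_eq ((Primrec.eq.exists_mem_list).comp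
      (Primrec.const P.relators.toList) Primrec.fst) fun k => ?_)
    simp
  have hu : Primrec fun k : List ι × List ι × List ι × I => k.2.1 :=
    Primrec.fst.comp Primrec.snd
  have hv : Primrec fun k : List ι × List ι × List ι × I => k.2.2.1 :=
    Primrec.fst.comp (Primrec.snd.comp Primrec.snd)
  have hq : Primrec fun k : List ι × List ι × List ι × I => k.2.2.2 :=
    Primrec.snd.comp (Primrec.snd.comp Primrec.snd)
  convert isPi01Class_forall_imp_eq (A := A) hrel
    ((Primrec.list_append.comp (Primrec.list_append.comp hu Primrec.fst) hv).pair hq)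
    ((Primrec.list_append.comp hu hv).pair hq) using 1
  ext y
  simp only [mem_range_onWords, Prod.forall, Set.mem_ofPred_eq]
  exact forall_congr' fun r => by tauto

/-- The sequence listing the values of the configuration `c` at all words. -/
def code [Inhabited I] (c : G → I → A) : ℕ → A := fun n => P.onWords c (codeIndex n)

/-- The inverse of `FinPresentation.code`. -/
def decodeConfig (x : ℕ → A) : G → I → A := fun g q => x (encode (P.word g, q))

variable [Inhabited I]

theorem code_encode (c : G → I → A) (k : List ι × I) : P.code c (encode k) = P.onWords c k := by
  rw [code, codeIndex_encode]

@[simp] theorem decodeConfig_code (c : G → I → A) : P.decodeConfig (P.code c) = c := by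
  funext g q
  rw [decodeConfig, code_encode, onWords, eval_word]

variable (I) in
/-- The shift action on `G → I → A`, transported to sequences. -/
def codedShift (g : G) (x : ℕ → A) : ℕ → A :=
  P.code (shift g (P.decodeConfig x : G → I → A))

theorem codedShift_code (g : G) (c : G → I → A) :
    P.codedShift I g (P.code c) = P.code (shift g c) := by
  rw [codedShift, decodeConfig_code]

variable {Y : Set (G → I → A)}

theorem isActionOn_codedShift (hY : ∀ g, Set.MapsTo (shift g) Y Y) :
    IsActionOn (P.codedShift I) (P.code '' Y) := by
  refine ⟨?_, ?_, ?_⟩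
  · rintro g _ ⟨c, hc, rfl⟩
    exact P.codedShift_code g c ▸ ⟨_, hY g hc, rfl⟩
  · rintro _ ⟨c, -, rfl⟩
    rw [codedShift_code, shift_one]
  · rintro g h _ ⟨c, -, rfl⟩
    simp only [codedShift_code, shift_mul]

theorem mem_code_image {x : ℕ → A} : x ∈ P.code '' Y ↔
    (fun k => x (encode k)) ∈ P.onWords '' Y ∧
      ∀ n, x n = x (encode (codeIndex n : List ι × I)) := by
  constructor
  · rintro ⟨c, hc, rfl⟩
    exact ⟨⟨c, hc, funext fun k => (P.code_encode c k).symm⟩, fun n => (P.code_encode c _).symm⟩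
  · rintro ⟨⟨c, hc, hcx⟩, hx⟩
    refine ⟨c, hc, funext fun n => ?_⟩
    rw [hx]
    exact congrFun hcx (codeIndex n)

theorem mem_setRep_codedShift {m : ℕ} {t : Fin m → G} {i₀ : Fin m} (ht : t i₀ = 1)
    {y : ℕ → Fin m → A} : y ∈ SetRep t (P.codedShift I) (P.code '' Y) ↔
      (fun k => y (encode k) i₀) ∈ P.onWords '' Y ∧ ∀ k : ℕ × Fin m, y k.1 k.2 =
        y (encode (P.word (t k.2)⁻¹ ++ (codeIndex k.1 : List ι × I).1,
          (codeIndex k.1 : List ι × I).2)) i₀ := by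
  constructor
  · rintro ⟨_, ⟨c, hc, rfl⟩, hy⟩
    simp only [codedShift_code] at hy
    have hy₀ (k) : y (encode k) i₀ = P.onWords c k := by
      rw [← P.code_encode, ← shift_one c, ← ht, ← hy]
    refine ⟨⟨c, hc, funext fun k => (hy₀ k).symm⟩, fun k => ?_⟩
    rw [hy₀, ← congrFun (hy k.2) k.1 |>.symm]
    simp [code, onWords, shift]
  · rintro ⟨⟨c, hc, hcy⟩, hy⟩
    refine ⟨_, ⟨c, hc, rfl⟩, fun i => funext fun n => ?_⟩
    rw [codedShift_code, hy (n, i), ← congrFun hcy]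
    simp [code, onWords, shift]

variable [Finite A] [Primcodable A] [Inhabited A] [TopologicalSpace A] [DiscreteTopology A]

theorem effectivelyClosedSet_setRep_codedShift (hY : IsPi01Class (P.onWords '' Y)) {m : ℕ}
    {t : Fin m → G} {i₀ : Fin m} (ht : t i₀ = 1) :
    EffectivelyClosedSet (SetRep t (P.codedShift I) (P.code '' Y)) := by
  have hindex : Primrec fun k : ℕ × Fin m => (codeIndex k.1 : List ι × I) :=
    primrec_codeIndex.comp Primrec.fst
  have htranslate : Primrec fun k : ℕ × Fin m =>
      (encode (P.word (t k.2)⁻¹ ++ (codeIndex k.1 : List ι × I).1,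
        (codeIndex k.1 : List ι × I).2), i₀) :=
    (Primrec.encode.comp ((Primrec.list_append.comp ((Primrec.dom_finite fun i : Fin m =>
      P.word (t i)⁻¹).comp Primrec.snd) (Primrec.fst.comp hindex)).pair
        (Primrec.snd.comp hindex))).pair (Primrec.const i₀)
  have hbase : IsPi01Class {y : ℕ × Fin m → A | (fun k => y (encode k, i₀)) ∈ P.onWords '' Y} := by
    simpa using hY.forall_comp (K := Unit) (ρ := fun _ k => (encode k, i₀))
      ((Primrec.encode.comp Primrec.snd).pair (Primrec.const i₀))
  refine IsPi01Class.effectivelyClosedSet ?_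
  convert hbase.inter (isPi01Class_forall_eq Primrec.id htranslate) using 1
  ext y
  exact P.mem_setRep_codedShift ht

theorem isEffClosedAction_codedShift [Finite ι] (hinv : ∀ g, Set.MapsTo (shift g) Y Y)
    (hY : IsPi01Class (P.onWords '' Y)) : IsEffClosedAction (P.codedShift I) (P.code '' Y) := by
  obtain ⟨m, t, ⟨i₀, ht₀⟩, ht⟩ := P.exists_generating_tuple
  refine ⟨m, t, ?_, P.isActionOn_codedShift hinv, ⟨i₀, ht₀⟩, ht,
    P.effectivelyClosedSet_setRep_codedShift hY ht₀⟩
  have himage : P.code '' Y = (fun x k => x (encode k)) ⁻¹' (P.onWords '' Y) ∩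
      {x | ∀ n, x n = x (encode (codeIndex n : List ι × I))} :=
    Set.ext fun _ => P.mem_code_image
  rw [himage, Set.ofPred_forall]
  exact (hY.isClosed.preimage (by fun_prop)).inter
    (isClosed_iInter fun n => isClosed_eq (by fun_prop) (by fun_prop))

end FinPresentation

theorem SelfSimulable.exists_slidingBlockCode [Finite ι] [Primcodable ι] [Primcodable I]
    [Inhabited I] (hG : SelfSimulable G) (P : FinPresentation ι G) {Y : Set (G → I → Bool)}
    (hinv : ∀ g, Set.MapsTo (shift g) Y Y) (hY : IsPi01Class (P.onWords '' Y)) :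
    ∃ (k : ℕ) (p : (G → Fin k) → Prop) (Φ : (G → Fin k) → I → Bool), IsLocallyConstant p ∧
      Continuous Φ ∧ (fun z g => Φ (shift g⁻¹ z)) '' {z | ∀ g, p (shift g z)} = Y := by
  obtain ⟨k, Z, φ, hZ, hφ, hmaps, hsurj, hequiv⟩ := hG _ _ (P.isEffClosedAction_codedShift hinv hY)
  obtain ⟨ψ, hψ, hψφ⟩ := exists_continuous_eqOn_pi_bool hZ.isSubshift.1 hφ
  have hshift := hZ.isSubshift.2
  obtain ⟨p, hp, rfl⟩ := hZ.exists_isLocallyConstant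
  have hread {z} {c : G → I → Bool} (hz : ∀ g, p (shift g z)) (hzc : φ z = P.code c) :
      (fun g q => ψ (shift g⁻¹ z) (encode (P.word 1, q))) = c := by
    funext g q
    rw [hψφ (hshift g⁻¹ z hz), hequiv g⁻¹ z hz, hzc, P.codedShift_code, P.code_encode]
    simp [FinPresentation.onWords, shift]
  refine ⟨k, p, fun z q => ψ z (encode (P.word 1, q)), hp, by fun_prop, Set.Subset.antisymm ?_ ?_⟩
  · rintro _ ⟨z, hz, rfl⟩
    obtain ⟨c, hc, hcz⟩ := hmaps hz
    simpa only [hread hz hcz.symm] using hc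
  · intro c hc
    obtain ⟨z, hz, hzc⟩ := hsurj ⟨c, hc, rfl⟩
    exact ⟨z, hz, hread hz hzc⟩

end Coding

/-! ### Orbit tables -/

section OrbitTable

variable {ι G H J A : Type*} [Group G] [Group H] {m : ℕ} {s : Fin m → H}
  {act : H → (ℕ → A) → ℕ → A} {X : Set (ℕ → A)}

/-- The table `u` lists, word by word, the orbit of some point of `X`. -/
def IsOrbitTable (s : Fin m → H) (act : H → (ℕ → A) → ℕ → A) (X : Set (ℕ → A))
    (u : List (Fin m) → ℕ → A) : Prop :=
  ∃ x ∈ X, ∀ e, u e = act (e.map s).prod x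

theorem isOrbitTable_iff (hact : IsActionOn act X) {j₀ : Fin m} (hj₀ : s j₀ = 1)
    {u : List (Fin m) → ℕ → A} : IsOrbitTable s act X u ↔
      ∀ e, (fun n i => u (i :: e) n) ∈ SetRep s act X ∧ u (j₀ :: e) = u e := by
  obtain ⟨hmaps, hone, hmul⟩ := hact
  constructor
  · rintro ⟨x, hx, hu⟩ e
    refine ⟨⟨u e, hu e ▸ hmaps _ hx, fun i => ?_⟩, by simp [hu, hj₀]⟩
    simp only [hu, List.map_cons, List.prod_cons, hmul _ _ _ hx]
  · intro h
    have hstep (e) : u e ∈ X ∧ ∀ i, u (i :: e) = act (s i) (u e) := by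
      obtain ⟨⟨x, hx, hxu⟩, he⟩ := h e
      obtain rfl : u e = x := by rw [← he, ← hone x hx, ← hj₀, ← hxu]
      exact ⟨hx, hxu⟩
    refine ⟨u [], (hstep []).1, fun e => ?_⟩
    induction e with
    | nil => exact (hone _ (hstep []).1).symm
    | cons i e ih => rw [(hstep e).2, ih, List.map_cons, List.prod_cons, hmul _ _ _ (hstep []).1]

/-- The configurations over `G` carrying an orbit table of the action of `H` at each point, and a
bit for each link `j : J`; if that bit is set at `g`, then the points `x` and `y` whose orbits are
listed at `g` and `g * t j` satisfy `a j · x = b j · y`. -/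
def orbitConfigs (s : Fin m → H) (act : H → (ℕ → Bool) → ℕ → Bool) (X : Set (ℕ → Bool))
    (word : H → List (Fin m)) (a b : J → H) (t : J → G) :
    Set (G → (List (Fin m) × ℕ) ⊕ J → Bool) :=
  {c | ∀ g, IsOrbitTable s act X (fun e n => c g (.inl (e, n))) ∧
    ∀ j, c g (.inr j) = true →
      ∀ n, c g (.inl (word (a j), n)) = c (g * t j) (.inl (word (b j), n))}

variable {act : H → (ℕ → Bool) → ℕ → Bool} {X : Set (ℕ → Bool)} {word : H → List (Fin m)}
  {a b : J → H} {t : J → G}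

theorem mapsTo_shift_orbitConfigs (g : G) :
    Set.MapsTo (shift g) (orbitConfigs s act X word a b t) (orbitConfigs s act X word a b t) := by
  intro c hc h
  simpa only [shift, mul_assoc] using hc (g⁻¹ * h)

theorem mem_orbitConfigs_iff (hact : IsActionOn act X) {j₀ : Fin m} (hj₀ : s j₀ = 1)
    (P : FinPresentation ι G) {c : G → (List (Fin m) × ℕ) ⊕ J → Bool} :
    c ∈ orbitConfigs s act X word a b t ↔
      (∀ k : List ι × List (Fin m),
        (fun n i => P.onWords c (k.1, .inl (i :: k.2, n))) ∈ SetRep s act X) ∧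
      (∀ k : List ι × List (Fin m) × ℕ, P.onWords c (k.1, .inl (j₀ :: k.2.1, k.2.2)) =
        P.onWords c (k.1, .inl k.2)) ∧
      ∀ k : List ι × J × ℕ, P.onWords c (k.1, .inr k.2.1) = true →
        P.onWords c (k.1, .inl (word (a k.2.1), k.2.2)) =
          P.onWords c (k.1 ++ P.word (t k.2.1), .inl (word (b k.2.1), k.2.2)) := by
  have hsurj : Function.Surjective P.eval := fun g => ⟨_, P.eval_word g⟩
  simp only [orbitConfigs, Set.mem_ofPred_eq, isOrbitTable_iff hact hj₀, forall_and, Prod.forall,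
    FinPresentation.onWords, FinPresentation.eval_append, FinPresentation.eval_word,
    hsurj.forall, funext_iff, and_assoc]
  tauto

theorem isPi01Class_onWords_orbitConfigs [Primcodable ι] [Finite J] [Primcodable J]
    (hact : IsActionOn act X) {j₀ : Fin m} (hj₀ : s j₀ = 1)
    (hX : EffectivelyClosedSet (SetRep s act X)) (P : FinPresentation ι G) :
    IsPi01Class (P.onWords '' orbitConfigs s act X word a b t) := by
  have hrow : Primrec₂ fun (k : List ι × List (Fin m)) (q : ℕ × Fin m) =>
      ((k.1, .inl (q.2 :: k.2, q.1)) : List ι × ((List (Fin m) × ℕ) ⊕ J)) :=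
    (Primrec.fst.comp Primrec.fst).pair (Primrec.sumInl.comp ((Primrec.list_cons.comp
      (Primrec.snd.comp Primrec.snd) (Primrec.snd.comp Primrec.fst)).pair
        (Primrec.fst.comp Primrec.snd)))
  have hentry : Primrec fun k : List ι × List (Fin m) × ℕ =>
      ((k.1, .inl k.2) : List ι × ((List (Fin m) × ℕ) ⊕ J)) :=
    Primrec.fst.pair (Primrec.sumInl.comp Primrec.snd)
  have hcons : Primrec fun k : List ι × List (Fin m) × ℕ =>
      ((k.1, .inl (j₀ :: k.2.1, k.2.2)) : List ι × ((List (Fin m) × ℕ) ⊕ J)) :=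
    hentry.comp (Primrec.fst.pair ((Primrec.list_cons.comp (Primrec.const j₀)
      (Primrec.fst.comp Primrec.snd)).pair (Primrec.snd.comp Primrec.snd)))
  have hlink (d : J → H) : Primrec fun k : List ι × J × ℕ => (word (d k.2.1), k.2.2) :=
    ((Primrec.dom_finite fun j => word (d j)).comp (Primrec.fst.comp Primrec.snd)).pair
      (Primrec.snd.comp Primrec.snd)
  have hbit : Primrec fun k : List ι × J × ℕ =>
      [(((k.1, .inr k.2.1) : List ι × ((List (Fin m) × ℕ) ⊕ J)), true)] :=
    Primrec.list_cons.comp ((Primrec.fst.pair (Primrec.sumInr.comp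
      (Primrec.fst.comp Primrec.snd))).pair (Primrec.const true)) (Primrec.const [])
  have htarget : Primrec fun k : List ι × J × ℕ => k.1 ++ P.word (t k.2.1) :=
    Primrec.list_append.comp Primrec.fst ((Primrec.dom_finite fun j => P.word (t j)).comp
      (Primrec.fst.comp Primrec.snd))
  convert P.isPi01Class_range_onWords.inter ((hX.isPi01Class.forall_comp hrow).inter
    ((isPi01Class_forall_eq hcons hentry).inter (isPi01Class_forall_matches_imp_eq .true hbit
      (hentry.comp (Primrec.fst.pair (hlink a))) (hentry.comp (htarget.pair (hlink b)))))) using 1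
  rw [← Set.image_preimage_eq_range_inter]
  congr 1
  ext c
  simp only [mem_orbitConfigs_iff hact hj₀ P, Matches, List.forall_mem_singleton,
    Set.mem_preimage, Set.mem_inter_iff, Set.mem_ofPred_eq, true_imp_iff]

theorem exists_points_of_mem_orbitConfigs (hword : ∀ h, ((word h).map s).prod = h)
    {c : G → (List (Fin m) × ℕ) ⊕ J → Bool} (hc : c ∈ orbitConfigs s act X word a b t) :
    ∃ y : G → ℕ → Bool, (∀ g, y g ∈ X) ∧
      (∀ g h, (fun n => c g (.inl (word h, n))) = act h (y g)) ∧
      ∀ g j, c g (.inr j) = true → act (a j) (y g) = act (b j) (y (g * t j)) := by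
  choose y hyX hy using fun g => (hc g).1
  have hread (g h) : (fun n => c g (.inl (word h, n))) = act h (y g) := by
    simpa [hword] using hy g (word h)
  refine ⟨y, hyX, hread, fun g j hj => ?_⟩
  rw [← hread, ← hread]
  exact funext ((hc g).2 j hj)

open Classical in
/-- The orbit configuration listing the orbits of the points `y g`, with all possible bits set. -/
noncomputable def orbitConfig (s : Fin m → H) (act : H → (ℕ → Bool) → ℕ → Bool) (a b : J → H)
    (t : J → G) (y : G → ℕ → Bool) : G → (List (Fin m) × ℕ) ⊕ J → Bool := fun g =>
  Sum.elim (fun q => act (q.1.map s).prod (y g) q.2)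
    fun j => decide (act (a j) (y g) = act (b j) (y (g * t j)))

theorem orbitConfig_mem (hword : ∀ h, ((word h).map s).prod = h) {y : G → ℕ → Bool}
    (hy : ∀ g, y g ∈ X) : orbitConfig s act a b t y ∈ orbitConfigs s act X word a b t := by
  refine fun g => ⟨⟨y g, hy g, fun e => rfl⟩, fun j hj n => ?_⟩
  simp only [orbitConfig, Sum.elim_inr, Sum.elim_inl, decide_eq_true_eq, hword] at hj ⊢
  rw [hj]

end OrbitTable

theorem SelfSimulable.exists_image_eq_orbitConfigs {ι G H J : Type*} [Group G] [Group H]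
    [Finite ι] [Primcodable ι] [Finite J] (hG : SelfSimulable G) (P : FinPresentation ι G) {m : ℕ}
    {s : Fin m → H} {act : H → (ℕ → Bool) → ℕ → Bool} {X : Set (ℕ → Bool)}
    (hX : IsEffClosedActionWith s act X) (word : H → List (Fin m)) (a b : J → H) (t : J → G) :
    ∃ (k : ℕ) (p : (G → Fin k) → Prop) (Φ : (G → Fin k) → (List (Fin m) × ℕ) ⊕ J → Bool),
      IsLocallyConstant p ∧ Continuous Φ ∧
        (fun z g => Φ (shift g⁻¹ z)) '' {z | ∀ g, p (shift g z)} =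
          orbitConfigs s act X word a b t := by
  obtain ⟨-, hact, ⟨j₀, hj₀⟩, -, hset⟩ := hX
  obtain ⟨n, ⟨e⟩⟩ := Finite.exists_equiv_fin J
  let _ : Primcodable J := .ofEquiv (Fin n) e
  let _ : Inhabited ((List (Fin m) × ℕ) ⊕ J) := ⟨.inl default⟩
  exact hG.exists_slidingBlockCode P mapsTo_shift_orbitConfigs
    (isPi01Class_onWords_orbitConfigs hact hj₀ hset P)

/-! ### Tilings carrying a graph -/

/-- A letter of the alphabet used to draw on `H` a graph with edges labelled by `ι`. The vertices
are the pairs in `H × K` marked alive; the letter at `h` describes the vertices in the fibre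
`{h} × K`, their labels in `A` and outgoing edges, and selects one vertex. A vertex near `h` is
specified by its displacement in `B` and its position in `K`. -/
structure Tile {H : Type*} (B : Set H) (K ι A : Type*) where
  /-- Which positions carry a vertex. -/
  alive : K → Prop
  /-- The labels of the vertices. -/
  label : K → A
  /-- The target of an edge. -/
  next : K → ι → B × K
  /-- The selected vertex. -/
  sel : B × K

namespace Tile

variable {ι G H K A : Type*} {B : Set H}

instance : TopologicalSpace (Tile B K ι A) := ⊥

instance : DiscreteTopology (Tile B K ι A) := ⟨rfl⟩

instance [Finite B] [Finite K] [Finite ι] [Finite A] : Finite (Tile B K ι A) :=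
  Finite.of_injective (fun a => (a.alive, a.label, a.next, a.sel)) fun a a' h => by
    cases a
    simp_all

/-- There is a vertex at `v`. -/
def Alive (x : H → Tile B K ι A) (v : H × K) : Prop := (x v.1).alive v.2

/-- The label of a vertex. -/
def labelAt (x : H → Tile B K ι A) (v : H × K) : A := (x v.1).label v.2

theorem isLocallyConstant_alive (v : H × K) :
    IsLocallyConstant fun x : H → Tile B K ι A => Alive x v :=
  (isLocallyConstant_apply v.1).comp fun a : Tile B K ι A => a.alive v.2

theorem isLocallyConstant_labelAt (v : H × K) :
    IsLocallyConstant fun x : H → Tile B K ι A => labelAt x v :=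
  (isLocallyConstant_apply v.1).comp fun a : Tile B K ι A => a.label v.2

variable [Group H]

/-- The vertex specified at `h` by a displacement and a position. -/
def move (h : H) (q : B × K) : H × K := (h * q.1, q.2)

/-- Left translation of vertices. -/
def translate (g : H) (v : H × K) : H × K := (g * v.1, v.2)

/-- Follow an edge. -/
def step (x : H → Tile B K ι A) (v : H × K) (i : ι) : H × K := move v.1 ((x v.1).next v.2 i)

/-- Follow the edges labelled by the letters of a word. -/
def walk (x : H → Tile B K ι A) (v : H × K) (w : List ι) : H × K := w.foldl (step x) v

/-- The vertex selected at `h`. -/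
def selected (x : H → Tile B K ι A) (h : H) : H × K := move h (x h).sel

section Translate

variable (g : H) (x : H → Tile B K ι A) (v : H × K)

theorem translate_injective : Function.Injective (translate g : H × K → H × K) := fun v w => by
  simp [translate, Prod.ext_iff]

@[simp] theorem step_shift (i : ι) :
    step (shift g x) (translate g v) i = translate g (step x v i) := by
  simp [step, translate, move, shift, mul_assoc]

@[simp] theorem walk_shift (w : List ι) :
    walk (shift g x) (translate g v) w = translate g (walk x v w) := by
  induction w generalizing v with
  | nil => rfl
  | cons i w ih => simpa [walk] using ih (step x v i)

@[simp] theorem selected_shift (h : H) :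
    selected (shift g x) (g * h) = translate g (selected x h) := by
  simp [selected, translate, move, shift, mul_assoc]

@[simp] theorem alive_shift : Alive (shift g x) (translate g v) ↔ Alive x v := by
  simp [Alive, translate, shift]

@[simp] theorem labelAt_shift : labelAt (shift g x) (translate g v) = labelAt x v := by
  simp [labelAt, translate, shift]

end Translate

section LocallyConstant

theorem isLocallyConstant_step (v : H × K) (i : ι) :
    IsLocallyConstant fun x : H → Tile B K ι A => step x v i :=
  (isLocallyConstant_apply v.1).comp fun a : Tile B K ι A => move v.1 (a.next v.2 i)

theorem isLocallyConstant_walk (v : H × K) (w : List ι) :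
    IsLocallyConstant fun x : H → Tile B K ι A => walk x v w := by
  induction w generalizing v with
  | nil => exact .const v
  | cons i w ih => exact isLocallyConstant_apply_isLocallyConstant (isLocallyConstant_step v i) ih

theorem isLocallyConstant_selected (h : H) :
    IsLocallyConstant fun x : H → Tile B K ι A => selected x h :=
  (isLocallyConstant_apply h).comp fun a : Tile B K ι A => move h a.sel

end LocallyConstant

variable [Group G] (P : FinPresentation ι G)

/-- The configuration over `G` read off from the labels, starting at a vertex. -/
def config (x : H → Tile B K ι A) (v : H × K) : G → A := fun g => labelAt x (walk x v (P.word g))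

@[simp] theorem config_shift (g : H) (x : H → Tile B K ι A) (v : H × K) :
    config P (shift g x) (translate g v) = config P x v := by
  funext a
  simp [config]

/-- The local rule at a vertex of a drawing of the Cayley graph of `G`, with labels satisfying the
local rule `p` of a subshift over `G`. -/
def GraphRule (p : (G → A) → Prop) (x : H → Tile B K ι A) (v : H × K) : Prop :=
  Alive x v → (∀ i, Alive x (step x v i)) ∧ (∀ r ∈ P.relators, walk x v r = v) ∧ p (config P x v)

theorem graphRule_shift {p : (G → A) → Prop} {g : H} {x : H → Tile B K ι A} {v : H × K} :
    GraphRule P p (shift g x) (translate g v) ↔ GraphRule P p x v := by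
  simp [GraphRule, (translate_injective g).eq_iff]

variable {P} {p : (G → A) → Prop} {x : H → Tile B K ι A}

theorem alive_walk (hx : ∀ v, GraphRule P p x v) {v : H × K} (hv : Alive x v) (w : List ι) :
    Alive x (walk x v w) := by
  induction w generalizing v with
  | nil => exact hv
  | cons i _ ih => exact ih ((hx v hv).1 i)

theorem walk_append (v : H × K) (u w : List ι) : walk x v (u ++ w) = walk x (walk x v u) w :=
  List.foldl_append

theorem walk_eq_of_eval_eq (hx : ∀ v, GraphRule P p x v) {v : H × K} (hv : Alive x v)
    {w w' : List ι} (hw : P.eval w = P.eval w') : walk x v w = walk x v w' := by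
  refine P.eq_of_eval_eq (fun r hr u u' => ?_) hw
  rw [walk_append, walk_append, (hx _ (alive_walk hx hv u)).2.1 r hr, walk_append]

theorem config_walk_word (hx : ∀ v, GraphRule P p x v) {v : H × K} (hv : Alive x v) (g : G) :
    config P x (walk x v (P.word g)) = shift g⁻¹ (config P x v) := by
  funext a
  have hwalk : walk x v (P.word g ++ P.word a) = walk x v (P.word (g * a)) :=
    walk_eq_of_eval_eq hx hv (by simp)
  simp [config, shift, ← walk_append, hwalk]

theorem forall_shift_config (hx : ∀ v, GraphRule P p x v) {v : H × K} (hv : Alive x v) (g : G) :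
    p (shift g (config P x v)) := by
  rw [← inv_inv g, ← config_walk_word hx hv]
  exact (hx _ (alive_walk hx hv _)).2.2

variable (P) [TopologicalSpace A]

theorem continuous_config (v : H × K) :
    Continuous fun x : H → Tile B K ι A => config P x v :=
  continuous_pi fun g => (isLocallyConstant_apply_isLocallyConstant
    (isLocallyConstant_walk v (P.word g)) isLocallyConstant_labelAt).continuous

theorem isLocallyConstant_graphRule [Finite ι] (hp : IsLocallyConstant p) (v : H × K) :
    IsLocallyConstant fun x : H → Tile B K ι A => GraphRule P p x v := by
  have hstep : IsLocallyConstant fun x : H → Tile B K ι A => ∀ i, Alive x (step x v i) :=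
    isLocallyConstant_forall fun i => isLocallyConstant_apply_isLocallyConstant
      (isLocallyConstant_step v i) isLocallyConstant_alive
  have hrel : IsLocallyConstant fun x : H → Tile B K ι A => ∀ r : P.relators, walk x v r.1 = v :=
    isLocallyConstant_forall fun r => (isLocallyConstant_walk v r.1).comp (· = v)
  have hlabel : IsLocallyConstant fun x : H → Tile B K ι A => p (config P x v) :=
    hp.comp_continuous (continuous_config P v)
  simp only [Subtype.forall] at hrel
  exact (isLocallyConstant_alive v).comp₂ (hstep.comp₂ (hrel.comp₂ hlabel And) And) (· → ·)

end Tile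

/-! ### Drawing a Cayley graph -/

namespace Tile

variable {ι κ G H K A : Type*} [Group G] [Group H] {B : Set H}

/-- `x` draws the Cayley graph of `G`, with label `z g` at the vertex `σ g` representing `g`, and
selects at `h` the vertex representing `τ h`. -/
structure Draws (P : FinPresentation ι G) (σ : G → H × K) (τ : H → G) (z : G → A)
    (x : H → Tile B K ι A) : Prop where
  alive_iff : ∀ v, Alive x v ↔ v ∈ Set.range σ
  labelAt_eq : ∀ g, labelAt x (σ g) = z g
  step_eq : ∀ g i, step x (σ g) i = σ (g * P.gen i)
  selected_eq : ∀ h, selected x h = σ (τ h)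

theorem exists_draws (P : FinPresentation ι G) {σ : G → H × K} (hσ : σ.Injective)
    (hgen : ∀ g i, (σ g).1⁻¹ * (σ (g * P.gen i)).1 ∈ B) {τ : H → G}
    (hτ : ∀ h, h⁻¹ * (σ (τ h)).1 ∈ B) (z : G → A) :
    ∃ x : H → Tile B K ι A, Draws P σ τ z x := by
  let sel (h : H) : B × K := (⟨_, hτ h⟩, (σ (τ h)).2)
  let next (g : G) (i : ι) : B × K := (⟨_, hgen g i⟩, (σ (g * P.gen i)).2)
  refine ⟨fun h =>
    { alive := fun k => (h, k) ∈ Set.range σ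
      label := fun k => Function.extend σ z (fun _ => z 1) (h, k)
      next := fun k => Function.extend σ next (fun _ _ => sel h) (h, k)
      sel := sel h }, fun v => Iff.rfl, fun g => ?_, fun g i => ?_, fun h => ?_⟩
  · simp [labelAt, hσ.extend_apply]
  · simp [step, move, hσ.extend_apply, next]
  · simp [selected, move, sel]

namespace Draws

variable {P : FinPresentation ι G} {σ : G → H × K} {τ : H → G} {z : G → A}
  {x : H → Tile B K ι A}

theorem walk_eq (hx : Draws P σ τ z x) (g : G) (w : List ι) :
    walk x (σ g) w = σ (g * P.eval w) := by
  induction w generalizing g with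
  | nil => simp [walk]
  | cons i w ih => simpa [walk, hx.step_eq, mul_assoc] using ih (g * P.gen i)

theorem config_eq (hx : Draws P σ τ z x) (g : G) : config P x (σ g) = shift g⁻¹ z := by
  funext a
  simp [config, hx.walk_eq, hx.labelAt_eq, shift]

theorem graphRule (hx : Draws P σ τ z x) {p : (G → A) → Prop} (hp : ∀ g, p (shift g z))
    (v : H × K) : GraphRule P p x v := by
  intro hv
  obtain ⟨g, rfl⟩ := (hx.alive_iff v).1 hv
  refine ⟨fun i => ?_, fun r hr => ?_, ?_⟩
  · exact (hx.alive_iff _).2 ⟨_, (hx.step_eq g i).symm⟩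
  · rw [hx.walk_eq, P.eval_eq_one hr, mul_one]
  · rw [hx.config_eq]
    exact hp _

theorem coe_sel_eq (hx : Draws P σ τ z x) (h : H) : ((x h).sel.1 : H) = h⁻¹ * (σ (τ h)).1 := by
  simp [← hx.selected_eq, selected, move]

end Draws

end Tile

/-! ### Linked tilings -/

/-- A potential link between the vertices selected at two adjacent elements of `H`. -/
structure Link {G H : Type*} (B : Set H) (T : Set G) (κ : Type*) where
  /-- The displacement of the first vertex. -/
  source : B
  /-- The element of `G` leading from the first vertex to the second. -/
  offset : T
  /-- The generator leading from the first element of `H` to the second. -/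
  gen : κ
  /-- The displacement of the second vertex. -/
  target : B

instance {G H κ : Type*} {B : Set H} {T : Set G} [Finite B] [Finite T] [Finite κ] :
    Finite (Link B T κ) :=
  Finite.of_injective (fun j => (j.source, j.offset, j.gen, j.target)) fun j j' h => by
    cases j
    simp_all

namespace Tile

variable {ι κ G H K A : Type*} [Group G] [Group H] {B : Set H} {T : Set G}

/-- The local rule linking the vertex selected at `h` to those selected at the elements `h * s i`:
`L j z` says that the link `j` is present at a vertex carrying the configuration `z`. -/
def LinkRule (P : FinPresentation ι G) (s : κ → H) (L : Link B T κ → (G → A) → Prop)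
    (x : H → Tile B K ι A) (h : H) : Prop :=
  Alive x (selected x h) ∧ ∀ i, ∃ t : T,
    walk x (selected x h) (P.word t) = selected x (h * s i) ∧
      L ⟨(x h).sel.1, t, i, (x (h * s i)).sel.1⟩ (config P x (selected x h))

variable (P : FinPresentation ι G) {s : κ → H} {L : Link B T κ → (G → A) → Prop}
  {p : (G → A) → Prop}

theorem linkRule_shift {g h : H} {x : H → Tile B K ι A} :
    LinkRule P s L (shift g x) (g * h) ↔ LinkRule P s L x h := by
  have hshift (a : H) : shift g x (g * a) = x a := by simp [shift]
  simp [LinkRule, mul_assoc g, hshift, (translate_injective g).eq_iff]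

theorem isLocallyConstant_linkRule [TopologicalSpace A] [Finite κ] [Finite T]
    (hL : ∀ j, IsLocallyConstant (L j)) (h : H) :
    IsLocallyConstant fun x : H → Tile B K ι A => LinkRule P s L x h := by
  refine ((isLocallyConstant_apply_isLocallyConstant (isLocallyConstant_selected h)
    isLocallyConstant_alive).comp₂ (isLocallyConstant_forall fun i => isLocallyConstant_exists
      fun t => IsLocallyConstant.comp₂ ?_ ?_ And) And)
  · exact isLocallyConstant_apply_isLocallyConstant (isLocallyConstant_selected h) fun v =>
      (isLocallyConstant_walk v (P.word t)).comp₂ (isLocallyConstant_selected _) (· = ·)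
  · have hlink := (isLocallyConstant_apply h).comp₂ (isLocallyConstant_apply (h * s i))
      fun a a' : Tile B K ι A => (⟨a.sel.1, t, i, a'.sel.1⟩ : Link B T κ)
    exact isLocallyConstant_apply_isLocallyConstant hlink fun j =>
      isLocallyConstant_apply_isLocallyConstant (isLocallyConstant_selected h) fun v =>
        (hL j).comp_continuous (continuous_config P v)

/-- The tilings drawing the Cayley graph of `G`, with labels satisfying the local rule `p` and
selected vertices linked according to `L`. -/
def linkedTilings (p : (G → A) → Prop) (s : κ → H) (L : Link B T κ → (G → A) → Prop) :
    Set (H → Tile B K ι A) :=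
  {x | ∀ h, (∀ k, GraphRule P p x (h, k)) ∧ LinkRule P s L x h}

theorem isSFT_linkedTilings [TopologicalSpace A] [Finite A] [Finite B] [Finite K] [Finite T]
    [Finite ι] [Finite κ] (hp : IsLocallyConstant p) (hL : ∀ j, IsLocallyConstant (L j)) :
    IsSFT (linkedTilings P p s L : Set (H → Tile B K ι A)) := by
  refine isSFT_of_isLocallyConstant (fun g x h => and_congr (forall_congr' fun k => ?_)
    (linkRule_shift P)) ?_
  · exact graphRule_shift (P := P) (v := (h, k))
  · exact (isLocallyConstant_forall fun k => isLocallyConstant_graphRule P hp _).comp₂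
      (isLocallyConstant_linkRule P hL 1) And

theorem Draws.mem_linkedTilings {P : FinPresentation ι G} {σ : G → H × K} {τ : H → G}
    {z : G → A} {x : H → Tile B K ι A} (hx : Draws P σ τ z x) (hp : ∀ g, p (shift g z))
    (hT : ∀ h i, (τ h)⁻¹ * τ (h * s i) ∈ T)
    (hL : ∀ h i, L ⟨(x h).sel.1, ⟨_, hT h i⟩, i, (x (h * s i)).sel.1⟩ (shift (τ h)⁻¹ z)) :
    x ∈ linkedTilings P p s L := by
  refine fun h => ⟨fun k => hx.graphRule hp _, ?_, fun i => ⟨⟨_, hT h i⟩, ?_, ?_⟩⟩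
  · rw [hx.selected_eq, hx.alive_iff]
    exact ⟨_, rfl⟩
  · simp [hx.selected_eq, hx.walk_eq]
  · rw [hx.selected_eq, hx.config_eq]
    exact hL h i

end Tile

/-! ### Reading points -/

namespace Tile

variable {ι G H K A : Type*} [Group G] [Group H] {B : Set H} {T : Set G} {m : ℕ}

section ReadPoint

variable (P : FinPresentation ι G) (word : H → List (Fin m))
  (Φ : (G → A) → (List (Fin m) × ℕ) ⊕ Link B T (Fin m) → Bool)

/-- The point read at `h`: the entry of the orbit table at the selected vertex which corresponds
to the displacement of that vertex. -/
def readPoint (x : H → Tile B K ι A) (h : H) : ℕ → Bool :=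
  fun n => Φ (config P x (selected x h)) (.inl (word (x h).sel.1, n))

@[simp] theorem readPoint_shift (g : H) (x : H → Tile B K ι A) (h : H) :
    readPoint P word Φ (shift g x) (g * h) = readPoint P word Φ x h := by
  have hshift : shift g x (g * h) = x h := by simp [shift]
  funext n
  simp [readPoint, hshift]

theorem continuous_readPoint [TopologicalSpace A] (hΦ : Continuous Φ) (h : H) :
    Continuous fun x : H → Tile B K ι A => readPoint P word Φ x h :=
  continuous_pi fun n => continuous_apply_isLocallyConstant
    (f := fun (q : B × K) x => Φ (config P x (selected x h)) (.inl (word q.1, n)))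
    ((isLocallyConstant_apply h).comp fun a : Tile B K ι A => a.sel) fun _ =>
      continuous_apply_isLocallyConstant (isLocallyConstant_selected h) fun v =>
        (continuous_apply _).comp (hΦ.comp (continuous_config P v))

end ReadPoint

/-- The orbit configurations with one bit for each link. A link relates the points read at its two
ends. -/
def linkConfigs (s : Fin m → H) (act : H → (ℕ → Bool) → ℕ → Bool) (X : Set (ℕ → Bool))
    (word : H → List (Fin m)) (B : Set H) (T : Set G) :
    Set (G → (List (Fin m) × ℕ) ⊕ Link B T (Fin m) → Bool) :=
  orbitConfigs s act X word (fun j => j.source) (fun j => s j.gen * j.target) fun j => j.offset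

variable {P : FinPresentation ι G} {s : Fin m → H} {act : H → (ℕ → Bool) → ℕ → Bool}
  {X : Set (ℕ → Bool)} {word : H → List (Fin m)}
  {Φ : (G → A) → (List (Fin m) × ℕ) ⊕ Link B T (Fin m) → Bool} {p : (G → A) → Prop}

theorem readPoint_mem_and_eq (hact : IsActionOn act X) (hword : ∀ h, ((word h).map s).prod = h)
    (hΦ : Set.MapsTo (fun z g => Φ (shift g⁻¹ z)) {z | ∀ g, p (shift g z)}
      (linkConfigs s act X word B T)) {x : H → Tile B K ι A}
    (hx : x ∈ linkedTilings P p s fun j z => Φ z (.inr j) = true) (h : H) :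
    readPoint P word Φ x h ∈ X ∧
      ∀ i, readPoint P word Φ x h = act (s i) (readPoint P word Φ x (h * s i)) := by
  obtain ⟨hmaps, -, hmul⟩ := hact
  have hgraph (v) : GraphRule P p x v := (hx v.1).1 v.2
  obtain ⟨halive, hlink⟩ := (hx h).2
  obtain ⟨y, hyX, hy, hyl⟩ := exists_points_of_mem_orbitConfigs hword
    (hΦ (forall_shift_config hgraph halive))
  have hread : readPoint P word Φ x h = act (x h).sel.1 (y 1) := by
    rw [← hy]
    funext n
    simp [readPoint, shift_one]
  refine ⟨hread ▸ hmaps _ (hyX 1), fun i => ?_⟩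
  obtain ⟨t, ht, hbit⟩ := hlink i
  have hread' : readPoint P word Φ x (h * s i) = act (x (h * s i)).sel.1 (y t) := by
    rw [← hy]
    funext n
    simp only [readPoint, ← ht, config_walk_word hgraph halive]
  rw [hread, hread', ← hmul _ _ _ (hyX t)]
  simpa using hyl 1 _ (by simpa [shift_one] using hbit)

theorem exists_readPoint_eq (hact : IsActionOn act X) (hword : ∀ h, ((word h).map s).prod = h)
    (hΦ : linkConfigs s act X word B T ⊆
      (fun z g => Φ (shift g⁻¹ z)) '' {z | ∀ g, p (shift g z)})
    {σ : G → H × K} (hσ : σ.Injective) (hgen : ∀ g i, (σ g).1⁻¹ * (σ (g * P.gen i)).1 ∈ B)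
    {τ : H → G} (hτ : ∀ h, h⁻¹ * (σ (τ h)).1 ∈ B) (hT : ∀ h i, (τ h)⁻¹ * τ (h * s i) ∈ T)
    {y : ℕ → Bool} (hy : y ∈ X) :
    ∃ x ∈ (linkedTilings P p s fun j z => Φ z (.inr j) = true : Set (H → Tile B K ι A)),
      readPoint P word Φ x 1 = y := by
  have hread (h : H) : act (h⁻¹ * (σ (τ h)).1) (act (σ (τ h)).1⁻¹ y) = act h⁻¹ y := by
    rw [← hact.2.2 _ _ _ hy, mul_inv_cancel_right]
  have hmem (h : H) : act h y ∈ X := hact.1 h hy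
  obtain ⟨z, hz, hΦz⟩ := hΦ (orbitConfig_mem hword fun g => hmem (σ g).1⁻¹)
  replace hΦz (g : G) := congrFun (congrFun hΦz g)
  obtain ⟨x, hx⟩ := exists_draws P hσ hgen hτ z
  refine ⟨x, hx.mem_linkedTilings hz hT fun h i => (hΦz _ _).trans ?_, funext fun n => ?_⟩
  · simp only [orbitConfig, Sum.elim_inr, decide_eq_true_eq, mul_inv_cancel_left, hx.coe_sel_eq]
    rw [hact.2.2 (s i) _ _ (hmem _), hread, hread, ← hact.2.2 _ _ _ hy, mul_inv_rev,
      mul_inv_cancel_left]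
  · simp only [readPoint, hx.selected_eq, hx.config_eq]
    refine (hΦz _ _).trans ?_
    simp only [orbitConfig, Sum.elim_inl, hword, hx.coe_sel_eq]
    rw [hread, inv_one, hact.2.1 _ hy]

end Tile

/-! ### Transfer along coarse equivalences -/

section Transfer

variable {G H : Type*} [Group G] [Group H]

theorem CoarseEquiv.exists_injective (c : CoarseEquiv H G) {ι κ : Type*} [Finite ι] [Finite κ]
    (t : ι → G) (s : κ → H) :
    ∃ (K : Set G) (B : Set H) (T : Set G) (σ : G → H × K),
      K.Finite ∧ B.Finite ∧ T.Finite ∧ σ.Injective ∧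
        (∀ g i, (σ g).1⁻¹ * (σ (g * t i)).1 ∈ B) ∧
        (∀ h, h⁻¹ * (σ (c.toFun h)).1 ∈ B) ∧
        ∀ h i, (c.toFun h)⁻¹ * c.toFun (h * s i) ∈ T := by
  refine ⟨Set.range fun g => (c.toFun (c.invFun g))⁻¹ * g,
    (⋃ i, Set.range fun g => (c.invFun g)⁻¹ * c.invFun (g * t i)) ∪
      Set.range fun h => h⁻¹ * c.invFun (c.toFun h),
    ⋃ i, Set.range fun h => (c.toFun h)⁻¹ * c.toFun (h * s i), fun g => (c.invFun g, ⟨_, g, rfl⟩),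
    c.right_inv, (Set.finite_iUnion fun i => c.close_invFun (t i)).union c.left_inv.symm,
    Set.finite_iUnion fun i => c.close_toFun (s i), fun g g' h => ?_,
    fun g i => .inl (Set.mem_iUnion.2 ⟨i, g, rfl⟩), fun h => .inr ⟨h, rfl⟩,
    fun h i => Set.mem_iUnion.2 ⟨i, h, rfl⟩⟩
  obtain ⟨hfst, hsnd⟩ := Prod.mk.inj h
  simpa [hfst] using congrArg Subtype.val hsnd

theorem eq_act_of_forall_gen {H A : Type*} [Group H] {m : ℕ} {s : Fin m → H}
    (hs : Submonoid.closure (Set.range s) = ⊤) {act : H → (ℕ → A) → ℕ → A} {X : Set (ℕ → A)}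
    (hact : IsActionOn act X) {y : H → ℕ → A} (hy : ∀ h, y h ∈ X)
    (hgen : ∀ h i, y h = act (s i) (y (h * s i))) (g h : H) : y h = act g (y (h * g)) := by
  obtain ⟨-, hone, hmul⟩ := hact
  obtain ⟨w, rfl⟩ := closure_range_eq_top_iff.1 hs g
  induction w generalizing h with
  | nil => simp [hone _ (hy h)]
  | cons i w ih =>
    rw [hgen h i, ih (h * s i), List.map_cons, List.prod_cons, hmul _ _ _ (hy _), mul_assoc]

theorem SelfSimulable.of_coarseEquiv (c : CoarseEquiv H G) (hp : FinitelyPresentedGroup G)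
    (hG : SelfSimulable G) : SelfSimulable H := by
  rintro X act ⟨m, s, hX⟩
  obtain ⟨-, hact, -, hs, -⟩ := id hX
  choose word hword using closure_range_eq_top_iff.1 hs
  obtain ⟨n, ⟨P⟩⟩ := hp.exists_finPresentation
  obtain ⟨K, B, T, σ, hK, hB, hT, hσ, hgen, hτ, hoff⟩ := c.exists_injective P.gen s
  have : Finite K := hK
  have : Finite B := hB
  have : Finite T := hT
  obtain ⟨k, p, Φ, hp, hΦ, hΦp⟩ := hG.exists_image_eq_orbitConfigs P (J := Link B T (Fin m)) hX word
    (fun j => j.source) (fun j => s j.gen * j.target) fun j => j.offset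
  have hbit (j) : IsLocallyConstant fun z => Φ z (.inr j) = true :=
    ((IsLocallyConstant.iff_continuous _).2 ((continuous_apply _).comp hΦ)).comp (· = true)
  have hread (x) (hx : x ∈ Tile.linkedTilings P p s _) :=
    Tile.readPoint_mem_and_eq hact hword (Set.mapsTo_iff_image_subset.2 hΦp.subset) (K := K) hx
  refine isFactorOfSFT_of_finite (Tile.isSFT_linkedTilings P (K := K) hp hbit)
    (φ := fun x => Tile.readPoint P word Φ x 1)
    ⟨(Tile.continuous_readPoint P word Φ hΦ 1).continuousOn, fun x hx => (hread x hx 1).1,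
      fun y hy => Tile.exists_readPoint_eq hact hword hΦp.superset hσ hgen hτ hoff hy,
      fun g x hx => ?_⟩
  have hshift := Tile.readPoint_shift P word Φ g x g⁻¹
  rw [mul_inv_cancel] at hshift
  simpa [hshift] using eq_act_of_forall_gen hs hact (fun h => (hread x hx h).1)
    (fun h => (hread x hx h).2) g g⁻¹

end Transfer

/-- Self-simulability is invariant under quasi-isometry of finitely presented
groups. -/
theorem selfSimulable_iff_of_quasiIsometric
    (G₁ G₂ : Type*) [Group G₁] [Group G₂]
    (hp₁ : FinitelyPresentedGroup G₁) (hp₂ : FinitelyPresentedGroup G₂)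
    (hqi : QuasiIsometric G₁ G₂) :
    SelfSimulable G₁ ↔ SelfSimulable G₂ := by
  obtain ⟨c⟩ := hqi.nonempty_coarseEquiv
  exact ⟨.of_coarseEquiv c hp₁, .of_coarseEquiv c.symm hp₂⟩

end SelfSim
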